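/- For every ε > 0 there exist δ > 0 and a natural number n₀ such that the following holds: every 3-uniform hypergraph H on a vertex set of n ≥ n₀ vertices with the property that every subset A of the vertices with |A| ≥ δ·n spans at least (1/4 + ε)·C(|A|,3) edges of H, contains K₄⁻ as a subgraph; that is, there exist four distinct vertices such that at least three of the four 3-element subsets of these vertices are edges of H. -/

import Mathlib

/-!
Suppose that there are arbitrarily good counterexamples: `K₄⁻`-free 3-graphs in which all large vertex
sets have density at least `1/4 + ε` (`Host`). In a `K₄⁻`-free 3-graph all link graphs are
triangle-free, and the codegree neighbourhoods `N(x, z)` are independent in the link of `x`.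

For disjoint `X`, `B` and sets `S x ⊆ B`, `x ∈ X`, such that `S x` is independent in the link of `x`,
consider the density of the relation `y ∈ S x` on `X × B`. Let `h ≥ 1/2` be the critical value
such that hosts exist in which these densities are at most `h + o(1)`, while for `h > 1/2` no
hosts exist in which they are at most some smaller constant (`exists_critical`). In a host at the
critical value some family `S` therefore has density `h - o(1)`; by the upper bound on the complements
it has density at least `h - o(1)` on every large subrectangle, and for `z ∈ S x` the
neighbourhood `N(x, z)` avoids `S x`, so codegrees have density at most `1 - h + o(1)` from
`{x | z ∈ S x}` (`exists_step`; for `h = 1/2` the full relation does the same). Iterating inside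
`B` gives arbitrarily many parts with this structure (`exists_sequence`).

Shrink the parts so that each vertex `z` has large degree in this relation to all earlier parts, and
so that all `z` in a part agree on whether the link of `z` has density at least `1/4 + ε/2` on the pair
of parts `(a, b)` (`exists_uniform_subsets`). By Ramsey's theorem all triples of parts may be
assumed to be alike. If the links are sparse on all pairs, then the union of the parts is sparser than a
host allows (`sparse_union_false`). Otherwise a vertex `z` of the last part has a triangle-free link
`T` of density at least `1/4 + ε/2` on all pairs of earlier parts. This link has density at most `h` on
all subrectangles, and at most `1 - h` from the `h`-proportion of vertices related to `z`.

This is impossible (`exists_sparse_pair`). Clean `T` by Szemerédi's regularity lemma to a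
triangle-free graph between boundedly many classes (`exists_cleaning`). Pass to parts `a < b < c` among
which the maximum cleaned degrees behave monotonically, and let `t` in part `a` attain the
maximum degree density `q` to both `b` and `c`, up to small errors. Degrees from part `b` to part `c` are at most `q`, and
at most `1 - q` for neighbours of `t`, which form a `q`-proportion. Weighting degrees by
`1 - h` or `h` bounds the density of `T` between `b` and `c` by
`(1 - h) q (2 h + 1 - 2 q) ≤ 1/4` when `q ≥ 1/2` (`quarter_bound`), and by `2 h (1 - h) q ≤ 1/4` when
`q ≤ 1/2`.
-/

section

open Finset
open scoped Classical

namespace ErdosSos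

/-! ### Counting pairs -/

/-- The number (as a real) of pairs `(x, y) ∈ X × Y` with `R x y`. -/
noncomputable def ec {α β : Type*} (R : α → β → Prop) (X : Finset α) (Y : Finset β) : ℝ :=
  ∑ x ∈ X, (#{y ∈ Y | R x y} : ℝ)

section Counting

variable {α β : Type*} {R S : α → β → Prop} {X X₁ X₂ : Finset α} {Y Y₁ Y₂ : Finset β}

lemma ec_nonneg : 0 ≤ ec R X Y := Finset.sum_nonneg fun _ _ => Nat.cast_nonneg _

lemma ec_eq_sum : ec R X Y = ∑ x ∈ X, ∑ y ∈ Y, if R x y then (1 : ℝ) else 0 := by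
  unfold ec
  refine Finset.sum_congr rfl fun x _ => ?_
  rw [Finset.card_filter]; push_cast; rfl

lemma ec_swap : ec R X Y = ec (fun y x => R x y) Y X := by
  rw [ec_eq_sum, ec_eq_sum, Finset.sum_comm]

lemma ec_le_mul : ec R X Y ≤ #X * #Y := by
  unfold ec
  calc _ ≤ ∑ x ∈ X, (#Y : ℝ) :=
        Finset.sum_le_sum fun x _ => by exact_mod_cast Finset.card_filter_le _ _
    _ = _ := by simp

lemma ec_mono (h : ∀ x ∈ X, ∀ y ∈ Y, R x y → S x y) : ec R X Y ≤ ec S X Y := by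
  unfold ec
  refine Finset.sum_le_sum fun x hx => ?_
  exact_mod_cast Finset.card_le_card (by
    intro y; simp only [Finset.mem_filter]; exact fun ⟨a, b⟩ => ⟨a, h x hx y a b⟩)

lemma ec_congr (h : ∀ x ∈ X, ∀ y ∈ Y, (R x y ↔ S x y)) : ec R X Y = ec S X Y :=
  le_antisymm (ec_mono fun x hx y hy => (h x hx y hy).1)
    (ec_mono fun x hx y hy => (h x hx y hy).2)

lemma ec_mono_left (h : X₁ ⊆ X₂) : ec R X₁ Y ≤ ec R X₂ Y :=
  Finset.sum_le_sum_of_subset_of_nonneg h fun _ _ _ => Nat.cast_nonneg _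

lemma ec_mono_right (h : Y₁ ⊆ Y₂) : ec R X Y₁ ≤ ec R X Y₂ := by
  rw [ec_swap, ec_swap (Y := Y₂)]; exact ec_mono_left h

lemma ec_sdiff_left [DecidableEq α] (h : X₁ ⊆ X₂) : ec R (X₂ \ X₁) Y + ec R X₁ Y = ec R X₂ Y :=
  Finset.sum_sdiff h

lemma ec_sdiff_right [DecidableEq β] (h : Y₁ ⊆ Y₂) : ec R X (Y₂ \ Y₁) + ec R X Y₁ = ec R X Y₂ := by
  rw [ec_swap, ec_swap (Y := Y₁), ec_swap (Y := Y₂)]; exact ec_sdiff_left h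

lemma ec_not : ec R X Y + ec (fun x y => ¬ R x y) X Y = #X * #Y := by
  unfold ec
  rw [← Finset.sum_add_distrib]
  rw [Finset.sum_congr rfl (g := fun _ => (#Y : ℝ))]
  · simp
  · intro x _
    rw [← Finset.card_filter_add_card_filter_not (s := Y) (fun y => R x y)]
    push_cast
    congr!

lemma ec_le_add {T : α → β → Prop} (h : ∀ x ∈ X, ∀ y ∈ Y, R x y → S x y ∨ T x y) :
    ec R X Y ≤ ec S X Y + ec T X Y := by
  simp only [ec_eq_sum, ← Finset.sum_add_distrib]
  refine Finset.sum_le_sum fun x hx => Finset.sum_le_sum fun y hy => ?_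
  have := h x hx y hy
  split_ifs <;> first | (norm_num; done) | tauto

/-- A `k`-subset on which the average of `f` is at least its average over `X`. -/
lemma exists_avg_subset (f : α → ℝ) : ∀ (k : ℕ) (X : Finset α), k ≤ #X →
    ∃ X' ⊆ X, #X' = k ∧ k * ∑ x ∈ X, f x ≤ #X * ∑ x ∈ X', f x := by
  intro k X hk
  induction hd : #X - k generalizing X with
  | zero => exact ⟨X, subset_rfl, by omega, by rw [show k = #X by omega]⟩
  | succ d ih =>
    have hne : X.Nonempty := by rw [← Finset.card_pos]; omega
    -- delete a vertex minimising `f`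
    obtain ⟨x0, hx0, hmin⟩ := Finset.exists_min_image X f hne
    have hc : #(X.erase x0) = #X - 1 := Finset.card_erase_of_mem hx0
    obtain ⟨X', hX', hk', hle⟩ := ih (X.erase x0) (by omega) (by omega)
    refine ⟨X', hX'.trans (Finset.erase_subset _ _), hk', ?_⟩
    have hs : ∑ x ∈ X.erase x0, f x + f x0 = ∑ x ∈ X, f x := Finset.sum_erase_add _ _ hx0
    have h1 : #X' * f x0 ≤ ∑ x ∈ X', f x := by
      rw [← nsmul_eq_mul]
      exact Finset.card_nsmul_le_sum _ _ _
        fun x hx => hmin x (Finset.erase_subset _ _ (hX' hx))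
    rw [hc, Nat.cast_sub (by omega)] at hle
    rw [hk'] at h1
    push_cast at hle
    rw [← hs]; linarith

end Counting

/-! ### Ramsey's theorem for triples -/

/-- A long enough set contains a `t`-set on which a colouring of pairs `a < b` depends only
on `a`. -/
lemma ramsey_pre_pair (t : ℕ) : ∃ N : ℕ, ∀ J : Finset ℕ, N ≤ #J → ∀ R : ℕ → ℕ → Prop,
    ∃ I ⊆ J, #I = t ∧ ∃ f : ℕ → Prop, ∀ a ∈ I, ∀ b ∈ I, a < b → (R a b ↔ f a) := by
  induction t with
  | zero => exact ⟨0, fun J _ R => ⟨∅, by simp, by simp, fun _ => True, by simp⟩⟩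
  | succ t ih =>
    obtain ⟨N, hN⟩ := ih
    refine ⟨2 * N + 1, fun J hJ R => ?_⟩
    have hne : J.Nonempty := by rw [← Finset.card_pos]; omega
    set m := J.min' hne with hm
    have hmJ : m ∈ J := Finset.min'_mem _ _
    obtain ⟨c, J', hJ', hcard, hc⟩ : ∃ c : Prop, ∃ J' ⊆ J.erase m, N ≤ #J' ∧
        ∀ b ∈ J', (R m b ↔ c) := by
      have h1 := Finset.card_filter_add_card_filter_not (s := J.erase m) (fun b => R m b)
      have h2 := Finset.card_erase_of_mem hmJ
      by_cases h : N ≤ #{b ∈ J.erase m | R m b}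
      · exact ⟨True, _, Finset.filter_subset _ _, h, fun b hb => by simp_all⟩
      · exact ⟨False, _, Finset.filter_subset _ _, (by omega : N ≤ #{b ∈ J.erase m | ¬ R m b}),
          fun b hb => by simp_all⟩
    obtain ⟨I, hI, hIt, f, hf⟩ := hN J' hcard R
    have hlt : ∀ b ∈ I, m < b := fun b hb =>
      Finset.min'_lt_of_mem_erase_min' _ _ (hJ' (hI hb))
    refine ⟨insert m I, ?_, ?_, Function.update f m c, ?_⟩
    · intro x hx
      rcases Finset.mem_insert.1 hx with rfl | hx
      · exact hmJ
      · exact Finset.mem_of_mem_erase (hJ' (hI hx))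
    · rw [Finset.card_insert_of_notMem fun h => (hlt m h).false, hIt]
    · intro a ha b hb hab
      rcases Finset.mem_insert.1 ha with rfl | ha
      · rcases Finset.mem_insert.1 hb with rfl | hb
        · exact absurd hab (lt_irrefl _)
        · rw [Function.update_self]; exact hc b (hI hb)
      · rcases Finset.mem_insert.1 hb with rfl | hb
        · exact absurd hab (hlt a ha).not_gt
        · rw [Function.update_of_ne (hlt a ha).ne']; exact hf a ha b hb hab

lemma ramsey_pair (t : ℕ) : ∃ N : ℕ, ∀ J : Finset ℕ, N ≤ #J → ∀ R : ℕ → ℕ → Prop,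
    ∃ I ⊆ J, #I = t ∧ ∃ c : Prop, ∀ a ∈ I, ∀ b ∈ I, a < b → (R a b ↔ c) := by
  obtain ⟨N, hN⟩ := ramsey_pre_pair (2 * t)
  refine ⟨N, fun J hJ R => ?_⟩
  obtain ⟨I, hI, hIt, f, hf⟩ := hN J hJ R
  have h1 := Finset.card_filter_add_card_filter_not (s := I) (fun b => f b)
  by_cases h : t ≤ #{b ∈ I | f b}
  · obtain ⟨I', hI', hc⟩ := Finset.exists_subset_card_eq h
    exact ⟨I', hI'.trans ((Finset.filter_subset _ _).trans hI), hc, True, fun a ha b hb hab => by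
      have ha' := Finset.mem_filter.1 (hI' ha)
      have hb' := Finset.mem_filter.1 (hI' hb)
      rw [hf a ha'.1 b hb'.1 hab]; simp [ha'.2]⟩
  · obtain ⟨I', hI', hc⟩ := Finset.exists_subset_card_eq (by omega : t ≤ #{b ∈ I | ¬ f b})
    exact ⟨I', hI'.trans ((Finset.filter_subset _ _).trans hI), hc, False, fun a ha b hb hab => by
      have ha' := Finset.mem_filter.1 (hI' ha)
      have hb' := Finset.mem_filter.1 (hI' hb)
      rw [hf a ha'.1 b hb'.1 hab]; simp [ha'.2]⟩

/-- A long enough set contains a `t`-set on which a colouring of triples `a < b < c` depends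
only on `a`. -/
lemma ramsey_pre_triple (t : ℕ) : ∃ N : ℕ, ∀ J : Finset ℕ, N ≤ #J → ∀ R : ℕ → ℕ → ℕ → Prop,
    ∃ I ⊆ J, #I = t ∧ ∃ f : ℕ → Prop,
      ∀ a ∈ I, ∀ b ∈ I, ∀ c ∈ I, a < b → b < c → (R a b c ↔ f a) := by
  induction t with
  | zero => exact ⟨0, fun J _ R => ⟨∅, by simp, by simp, fun _ => True, by simp⟩⟩
  | succ t ih =>
    obtain ⟨N, hN⟩ := ih
    obtain ⟨M, hM⟩ := ramsey_pair N
    refine ⟨M + 1, fun J hJ R => ?_⟩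
    have hne : J.Nonempty := by rw [← Finset.card_pos]; omega
    set m := J.min' hne with hm
    have hmJ : m ∈ J := Finset.min'_mem _ _
    have h2 := Finset.card_erase_of_mem hmJ
    obtain ⟨J', hJ', hcard, c, hc⟩ := hM (J.erase m) (by omega) (R m)
    obtain ⟨I, hI, hIt, f, hf⟩ := hN J' hcard.ge R
    have hlt : ∀ b ∈ I, m < b := fun b hb =>
      Finset.min'_lt_of_mem_erase_min' _ _ (hJ' (hI hb))
    refine ⟨insert m I, ?_, ?_, Function.update f m c, ?_⟩
    · intro x hx
      rcases Finset.mem_insert.1 hx with rfl | hx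
      · exact hmJ
      · exact Finset.mem_of_mem_erase (hJ' (hI hx))
    · rw [Finset.card_insert_of_notMem fun h => (hlt m h).false, hIt]
    · intro a ha b hb d hd hab hbd
      have hmb : ∀ x ∈ insert m I, m ≤ x := fun x hx => by
        rcases Finset.mem_insert.1 hx with rfl | hx
        · exact le_rfl
        · exact (hlt x hx).le
      have hb' : b ∈ I := by
        rcases Finset.mem_insert.1 hb with h | h
        · have := hmb a ha; omega
        · exact h
      have hd' : d ∈ I := by
        rcases Finset.mem_insert.1 hd with h | h
        · have := hmb b hb; omega
        · exact h
      rcases Finset.mem_insert.1 ha with rfl | ha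
      · rw [Function.update_self]; exact hc b (hI hb') d (hI hd') hbd
      · rw [Function.update_of_ne (hlt a ha).ne']; exact hf a ha b hb' d hd' hab hbd

/-- Ramsey's theorem for triples and two colours. -/
lemma ramsey_triple (t : ℕ) : ∃ N : ℕ, ∀ J : Finset ℕ, N ≤ #J → ∀ R : ℕ → ℕ → ℕ → Prop,
    ∃ I ⊆ J, #I = t ∧ ((∀ a ∈ I, ∀ b ∈ I, ∀ c ∈ I, a < b → b < c → R a b c) ∨
      (∀ a ∈ I, ∀ b ∈ I, ∀ c ∈ I, a < b → b < c → ¬ R a b c)) := by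
  obtain ⟨N, hN⟩ := ramsey_pre_triple (2 * t)
  refine ⟨N, fun J hJ R => ?_⟩
  obtain ⟨I, hI, hIt, f, hf⟩ := hN J hJ R
  have h1 := Finset.card_filter_add_card_filter_not (s := I) (fun b => f b)
  by_cases h : t ≤ #{b ∈ I | f b}
  · obtain ⟨I', hI', hc⟩ := Finset.exists_subset_card_eq h
    refine ⟨I', hI'.trans ((Finset.filter_subset _ _).trans hI), hc, Or.inl ?_⟩
    intro a ha b hb c hc hab hbc
    have ha' := Finset.mem_filter.1 (hI' ha)
    exact (hf a ha'.1 b (Finset.mem_filter.1 (hI' hb)).1 c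
      (Finset.mem_filter.1 (hI' hc)).1 hab hbc).2 ha'.2
  · obtain ⟨I', hI', hc⟩ := Finset.exists_subset_card_eq (by omega : t ≤ #{b ∈ I | ¬ f b})
    refine ⟨I', hI'.trans ((Finset.filter_subset _ _).trans hI), hc, Or.inr ?_⟩
    intro a ha b hb c hc hab hbc
    have ha' := Finset.mem_filter.1 (hI' ha)
    exact fun hR => ha'.2 ((hf a ha'.1 b (Finset.mem_filter.1 (hI' hb)).1 c
      (Finset.mem_filter.1 (hI' hc)).1 hab hbc).1 hR)

/-- If a property of triples cannot fail on all triples of a `u`-set, then it holds on all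
triples of some `t`-set. -/
lemma ramsey_avoid (t u : ℕ) : ∃ N : ℕ, ∀ J : Finset ℕ, N ≤ #J → ∀ R : ℕ → ℕ → ℕ → Prop,
    (∀ I ⊆ J, #I = u → ∃ a ∈ I, ∃ b ∈ I, ∃ c ∈ I, a < b ∧ b < c ∧ R a b c) →
    ∃ I ⊆ J, #I = t ∧ ∀ a ∈ I, ∀ b ∈ I, ∀ c ∈ I, a < b → b < c → R a b c := by
  obtain ⟨N, hN⟩ := ramsey_triple (max t u)
  refine ⟨N, fun J hJ R h => ?_⟩
  obtain ⟨I, hI, hIt, hR | hR⟩ := hN J hJ R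
  · obtain ⟨I', hI', hc⟩ := Finset.exists_subset_card_eq (hIt.symm ▸ le_max_left t u : t ≤ #I)
    exact ⟨I', hI'.trans hI, hc, fun a ha b hb c hc => hR a (hI' ha) b (hI' hb) c (hI' hc)⟩
  · obtain ⟨I', hI', hc⟩ := Finset.exists_subset_card_eq (hIt.symm ▸ le_max_right t u : u ≤ #I)
    obtain ⟨a, ha, b, hb, c, hc, hab, hbc, hr⟩ := h I' (hI'.trans hI) hc
    exact absurd hr (hR a (hI' ha) b (hI' hb) c (hI' hc) hab hbc)

/-! ### Cleaning triangle-free graphs -/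

/-- Cleaning a triangle-free graph: by the regularity lemma the vertices split into boundedly
many classes `cl`, and all but `η n²` ordered adjacent pairs lie in pairs of classes belonging to
a triangle-free relation `Q` on the classes. -/
lemma exists_cleaning_fintype {η : ℝ} (hη : 0 < η) : ∃ K : ℕ, ∀ (α : Type) [Fintype α]
    (G : SimpleGraph α), (∀ a b c, G.Adj a b → G.Adj a c → G.Adj b c → False) →
    ∃ (ι : Type) (cl : α → ι) (Q : ι → ι → Prop), #(univ.image cl) ≤ K ∧
      (∀ i j l, Q i j → Q i l → Q j l → False) ∧
      ec (fun x y => G.Adj x y ∧ ¬ Q (cl x) (cl y)) univ univ ≤ η * (Fintype.card α : ℝ) ^ 2 := by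
  set ε : ℝ := min (η / 2) 1 with hεdef
  have hε : 0 < ε := lt_min (by positivity) one_pos
  have hε1 : ε ≤ 1 := min_le_right _ _
  have hεη : ε ≤ η / 2 := min_le_left _ _
  set l : ℕ := ⌈4 / ε⌉₊ with hl
  have hl' : 4 / ε ≤ l := Nat.le_ceil _
  refine ⟨max l (SzemerediRegularity.bound (ε / 8) l), ?_⟩
  intro α _ G hG
  by_cases hc : l ≤ Fintype.card α
  swap
  · refine ⟨α, id, G.Adj, ?_, hG, ?_⟩
    · rw [Finset.image_id, Finset.card_univ]; exact le_max_of_le_left (by omega)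
    · have : ec (fun x y => G.Adj x y ∧ ¬ G.Adj (id x) (id y)) univ univ = 0 := by
        simp [ec]
      rw [this]; positivity
  have hlpos : 0 < l := Nat.ceil_pos.2 (by positivity)
  have : Nonempty α := Fintype.card_pos_iff.1 (by omega)
  obtain ⟨P, hPe, hlP, hPb, hPu⟩ := szemeredi_regularity G (ε := ε / 8) (l := l) (by positivity) hc
  have hP' : 4 / ε ≤ #P.parts := hl'.trans (by exact_mod_cast hlP)
  have key := SimpleGraph.regularityReduced_edges_card_aux hε hPe hPu hP'
  set R := G.regularityReduced P (ε / 8) (ε / 4) with hR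
  let Q : Finset α → Finset α → Prop := fun U V => U ∈ P.parts ∧ V ∈ P.parts ∧ U ≠ V ∧
    G.IsUniform (ε / 8) U V ∧ ε / 4 ≤ G.edgeDensity U V
  refine ⟨Finset α, P.part, Q, ?_, ?_, ?_⟩
  · refine le_max_of_le_right (le_trans (Finset.card_le_card ?_) hPb)
    intro U hU
    obtain ⟨x, -, rfl⟩ : ∃ x ∈ univ, P.part x = U := by simpa using hU
    exact P.part_mem.2 (Finset.mem_univ x)
  · rintro U V W ⟨hU, hV, -, u1, d1⟩ ⟨-, hW, -, u2, d2⟩ ⟨-, -, -, u3, d3⟩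
    have ht := G.triangle_counting' (ε := ε / 8) (by linarith) u1 (by linarith) u2 (by linarith) u3
    have hpos : ∀ S ∈ P.parts, (0 : ℝ) < #S := fun S hS => by
      exact_mod_cast Finset.card_pos.2 (P.nonempty_of_mem_parts hS)
    have h0 : 0 < (1 - 2 * (ε / 8)) * (ε / 8) ^ 3 * #U * #V * #W := by
      have := hpos U hU; have := hpos V hV; have := hpos W hW
      have : 0 < 1 - 2 * (ε / 8) := by linarith
      positivity
    have h1 := h0.trans_le ht
    obtain ⟨⟨a, b, c⟩, habc⟩ := Finset.card_pos.1 (by exact_mod_cast h1)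
    obtain ⟨-, h2, h3, h4⟩ := Finset.mem_filter.1 habc
    exact hG a b c h2 h3 h4
  · have hle : R ≤ G := SimpleGraph.regularityReduced_le
    have h1 : ec (fun x y => G.Adj x y ∧ ¬ Q (P.part x) (P.part y)) univ univ
        ≤ ec (G \ R).Adj univ univ := by
      refine ec_mono fun x _ y _ ⟨h, hQ⟩ => ?_
      rw [SimpleGraph.sdiff_adj]
      refine ⟨h, fun hRxy => hQ ?_⟩
      obtain ⟨-, U, hU, V, hV, hx, hy, hne, hu, hd⟩ := hRxy
      have e1 := P.part_eq_of_mem hU hx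
      have e2 := P.part_eq_of_mem hV hy
      simp only [e1, e2, Q]
      exact ⟨hU, hV, hne, hu, hd⟩
    have h2 : ec (G \ R).Adj univ univ = 2 * #(G \ R).edgeFinset := by
      have := (G \ R).sum_degrees_eq_twice_card_edges
      have h3 : ec (G \ R).Adj univ univ = ((∑ v, (G \ R).degree v : ℕ) : ℝ) := by
        unfold ec; push_cast
        refine Finset.sum_congr rfl fun x _ => ?_
        congr 1
        rw [← SimpleGraph.card_neighborFinset_eq_degree, SimpleGraph.neighborFinset_eq_filter]
        congr!
      rw [h3, this]; push_cast; congr!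
    have h3 : (#(G \ R).edgeFinset : ℝ) = #G.edgeFinset - #R.edgeFinset := by
      rw [SimpleGraph.edgeFinset_sdiff, Finset.card_sdiff_of_subset, Nat.cast_sub]
      · exact Finset.card_le_card (SimpleGraph.edgeFinset_mono hle)
      · exact SimpleGraph.edgeFinset_mono hle
    rw [h2, h3] at h1
    push_cast at key
    calc _ ≤ _ := h1
      _ ≤ 2 * ε * (Fintype.card α : ℝ) ^ 2 := by
        refine le_trans (le_of_eq ?_) key.le
        congr!
      _ ≤ _ := by gcongr; linarith

/-- `exists_cleaning_fintype` for the restriction of a triangle-free relation to a finset. -/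
lemma exists_cleaning {η : ℝ} (hη : 0 < η) : ∃ K : ℕ, ∀ (V : Type)
    (T : V → V → Prop) (W : Finset V), (∀ a b, T a b → T b a) → (∀ a, ¬ T a a) →
    (∀ a b c, T a b → T a c → T b c → False) →
    ∃ (ι : Type) (cl : V → ι) (Q : ι → ι → Prop), #(W.image cl) ≤ K ∧
      (∀ i j l, Q i j → Q i l → Q j l → False) ∧
      ec (fun x y => T x y ∧ ¬ Q (cl x) (cl y)) W W ≤ η * (#W : ℝ) ^ 2 := by
  obtain ⟨K, hK⟩ := exists_cleaning_fintype hη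
  refine ⟨K, fun V T W hs hi ht => ?_⟩
  let G : SimpleGraph W := { Adj := fun a b => T a b, symm := ⟨fun a b h => hs a b h⟩, loopless := ⟨fun a => hi a⟩ }
  obtain ⟨ι, cl, Q, h1, h3, h4⟩ := hK W G fun a b c => ht a b c
  refine ⟨Option ι, fun v => if h : v ∈ W then some (cl ⟨v, h⟩) else none,
    fun i j => ∃ i' j', i = some i' ∧ j = some j' ∧ Q i' j', ?_, ?_, ?_⟩
  · refine le_trans (Finset.card_le_card ?_)
      ((Finset.card_image_le (s := univ.image cl) (f := some)).trans h1)
    intro i hi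
    obtain ⟨x, hx, rfl⟩ : ∃ x ∈ W, (if h : x ∈ W then some (cl ⟨x, h⟩) else none) = i := by
      simpa only [Finset.mem_image] using hi
    simp only [Finset.mem_image]
    exact ⟨cl ⟨x, hx⟩, ⟨⟨x, hx⟩, Finset.mem_univ _, rfl⟩, by simp [hx]⟩
  · rintro i j l ⟨i', j', rfl, rfl, h⟩ ⟨i'', l', h5, rfl, h6⟩ ⟨j'', l'', h7, h8, h9⟩
    simp only [Option.some.injEq] at h5 h7 h8
    subst h5 h7 h8
    exact h3 _ _ _ h h6 h9
  · rw [Fintype.card_coe] at h4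
    refine le_trans (le_of_eq ?_) h4
    rw [ec_eq_sum, ec_eq_sum, ← Finset.sum_coe_sort W]
    refine Finset.sum_congr rfl fun x _ => ?_
    rw [← Finset.sum_coe_sort W]
    refine Finset.sum_congr rfl fun y _ => ?_
    congr 1
    simp [G]

/-! ### Robust maxima and the extremal optimisation -/

/-- A robust maximum of `f`: the largest `M` such that `f ≥ M` on a `ρ`-proportion of `Z`. -/
lemma exists_robust_max {V : Type} {Z : Finset V} {k : ℕ} (hk : 0 < k) (hZ : #Z = k)
    {ρ : ℝ} (hρ : 0 < ρ) (hρ1 : ρ ≤ 1) (f : V → ℕ) (hf : ∀ x ∈ Z, f x ≤ k) :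
    ∃ M ≤ k, ρ * k ≤ #{x ∈ Z | M ≤ f x} ∧ (#{x ∈ Z | M < f x} : ℝ) < ρ * k := by
  have hk' : (0 : ℝ) < k := by exact_mod_cast hk
  let p : ℕ → Prop := fun M => ρ * k ≤ #{x ∈ Z | M ≤ f x}
  have h0 : p 0 := by
    simp only [p, Nat.zero_le, Finset.filter_true, hZ]
    nlinarith
  refine ⟨Nat.findGreatest p k, Nat.findGreatest_le _, Nat.findGreatest_spec (P := p) (Nat.zero_le k) h0, ?_⟩
  by_cases h : Nat.findGreatest p k = k
  · rw [h, Finset.filter_false_of_mem fun x hx => (hf x hx).not_gt]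
    simp; positivity
  · have h1 := Nat.findGreatest_is_greatest (P := p) (Nat.lt_succ_self _)
      (lt_of_le_of_ne (Nat.findGreatest_le k) h)
    exact lt_of_not_ge h1

/-- A `d`-separated increasing sequence in `[0, k]` has at most `k / d + 1` terms. -/
lemma card_separated_le {J : Finset ℕ} {f : ℕ → ℝ} {k d : ℝ} (hd : 0 < d)
    (h0 : ∀ b ∈ J, 0 ≤ f b) (h1 : ∀ b ∈ J, f b ≤ k)
    (hs : ∀ b ∈ J, ∀ c ∈ J, b < c → f b + d < f c) : #J ≤ ⌊k / d⌋₊ + 1 := by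
  have key : ∀ b ∈ J, ∀ c ∈ J, b < c → ⌊f b / d⌋₊ < ⌊f c / d⌋₊ := by
    intro b hb c hc hbc
    have h2 : f b / d + 1 ≤ f c / d := by
      rw [div_add_one hd.ne']; gcongr; exact (hs b hb c hc hbc).le
    have h3 := Nat.floor_mono h2
    rw [Nat.floor_add_one (div_nonneg (h0 b hb) hd.le)] at h3
    omega
  have := Finset.card_le_card_of_injOn (s := J) (t := Finset.range (⌊k / d⌋₊ + 1))
    (fun b => ⌊f b / d⌋₊) ?_ ?_
  · simpa using this
  · intro b hb
    simp only [Finset.coe_range, Set.mem_Iio]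
    have : ⌊f b / d⌋₊ ≤ ⌊k / d⌋₊ := Nat.floor_mono (by gcongr; exact h1 b hb)
    omega
  · intro b hb c hc hbc
    rcases lt_trichotomy b c with h | h | h
    · exact absurd hbc (key b hb c hc h).ne
    · exact h
    · exact absurd hbc (key c hc b hb h).ne'

lemma exists_increasing_triple {I : Finset ℕ} (h : #I = 3) :
    ∃ a ∈ I, ∃ b ∈ I, ∃ c ∈ I, a < b ∧ b < c :=
  ⟨I.orderEmbOfFin h 0, I.orderEmbOfFin_mem h 0, I.orderEmbOfFin h 1, I.orderEmbOfFin_mem h 1,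
    I.orderEmbOfFin h 2, I.orderEmbOfFin_mem h 2, by simp, by simp⟩

/-- The extremal optimisation: the density of the pair `(b, c)` is at most `1/4`, with equality
only for `h = q = 1/2`. -/
lemma quarter_bound {h q : ℝ} (hh : 1 / 2 ≤ h) (hh1 : h ≤ 1) :
    (1 - h) * q * (2 * h + 1 - 2 * q) ≤ 1 / 4 := by
  have h1 : q * (2 * h + 1 - 2 * q) ≤ (2 * h + 1) ^ 2 / 8 := by
    nlinarith [sq_nonneg (4 * q - (2 * h + 1))]
  have h2 : (1 - h) * (2 * h + 1) ^ 2 ≤ 2 := by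
    nlinarith [mul_nonneg (sq_nonneg (2 * h - 1)) (by linarith : (0 : ℝ) ≤ h + 1)]
  nlinarith [mul_le_mul_of_nonneg_left h1 (by linarith : 0 ≤ 1 - h)]

/-- The weighted degree sum from a part `Z` to a later part. The weight of `x` is `1 - h` on `P` and
`h` elsewhere; `y x` is the degree of `x` in the cleaned graph. Nearly all degrees are at most
`q + ξ`, and on `S`, the neighbourhood of a vertex of degree at least `q`, triangle-freeness improves
this to `1 - q`. The worst case is that `S` lies in `P`, and then `quarter_bound` applies. -/
lemma weighted_sum_bound {V : Type} {Z P S : Finset V} {k : ℕ} (hZ : #Z = k)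
    (hP : P ⊆ Z) (hS : S ⊆ Z) {h q ω ξ ρ : ℝ} (hh : 1 / 2 ≤ h) (hh1 : h ≤ 1)
    (hq : 0 ≤ q) (hq1 : q ≤ 1) (hω : 0 ≤ ω) (hξ : 0 ≤ ξ) (hξ1 : ξ ≤ 1)
    (hPc : (h - ω) * k ≤ #P) (hSc : (q - ξ) * k ≤ #S) (y : V → ℝ)
    (hy : ∀ x ∈ Z, y x ≤ k) (hyS : ∀ x ∈ S, y x ≤ (1 - q) * k)
    (hex : (#{x ∈ Z | (q + ξ) * k < y x} : ℝ) ≤ ρ * k) :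
    ∑ x ∈ Z, (if x ∈ P then 1 - h else h) * y x ≤ (1 / 4 + ρ + 2 * ω + 3 * ξ) * (k : ℝ) ^ 2 := by
  set g : V → ℝ := fun x => if x ∈ P then 1 - h else h with hg
  have hk : (0 : ℝ) ≤ k := Nat.cast_nonneg _
  have hg0 : ∀ x, 1 - h ≤ g x := fun x => by simp only [hg]; split_ifs <;> linarith
  have hg1 : ∀ x, g x ≤ 1 := fun x => by simp only [hg]; split_ifs <;> linarith
  have hgn : ∀ x, 0 ≤ g x := fun x => by have := hg0 x; linarith
  have hPk : (#P : ℝ) ≤ k := by rw [← hZ]; exact_mod_cast Finset.card_le_card hP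
  -- the average weight is at most `2 h (1 - h) + ω`
  have hgs : ∑ x ∈ Z, g x ≤ (2 * h * (1 - h) + ω) * k := by
    have e : ∑ x ∈ Z, g x = h * k - (2 * h - 1) * #P := by
      have : ∀ x ∈ Z, g x = h - (2 * h - 1) * (if x ∈ P then 1 else 0) := fun x _ => by
        simp only [hg]; split_ifs <;> ring
      rw [Finset.sum_congr rfl this, Finset.sum_sub_distrib, ← Finset.mul_sum, Finset.sum_const, hZ,
        Finset.sum_ite_mem, Finset.inter_eq_right.2 hP]
      simp [mul_comm]
    rw [e]
    nlinarith [mul_le_mul_of_nonneg_left hPc (by linarith : 0 ≤ 2 * h - 1),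
      mul_nonneg (mul_nonneg hω (by linarith : 0 ≤ 2 - 2 * h)) hk]
  have hexs : ∑ x ∈ Z, (if (q + ξ) * k < y x then (k : ℝ) else 0) ≤ ρ * k * k := by
    rw [← Finset.sum_filter, Finset.sum_const, nsmul_eq_mul]
    gcongr
  have hk2 : 0 ≤ (k : ℝ) ^ 2 := by positivity
  -- for `q ≤ 1/2` the bound `q + ξ` on the degrees suffices; otherwise `S` is needed
  by_cases hq2 : q ≤ 1 / 2
  · have : ∀ x ∈ Z, g x * y x ≤ g x * ((q + ξ) * k) + if (q + ξ) * k < y x then (k : ℝ) else 0 := by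
      intro x hx
      split_ifs with hc
      · have := mul_nonneg (hgn x) (mul_nonneg (by linarith : 0 ≤ q + ξ) hk)
        nlinarith [hgn x, hg1 x, hy x hx]
      · have := mul_le_mul_of_nonneg_left (not_lt.1 hc) (hgn x); linarith
    refine (Finset.sum_le_sum this).trans ?_
    rw [Finset.sum_add_distrib, ← Finset.sum_mul]
    have h1 : (∑ x ∈ Z, g x) * ((q + ξ) * k) ≤ (2 * h * (1 - h) + ω) * k * ((q + ξ) * k) := by
      gcongr
    have h2 : (2 * h * (1 - h) + ω) ≤ 1 / 2 + ω := by nlinarith [sq_nonneg (2 * h - 1)]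
    have h3 : (2 * h * (1 - h) + ω) * (q + ξ) ≤ 1 / 4 + 2 * ω + 3 * ξ := by
      calc _ ≤ (1 / 2 + ω) * (1 / 2 + ξ) := by gcongr
        _ ≤ _ := by nlinarith
    nlinarith [mul_le_mul_of_nonneg_right h3 hk2]
  · push Not at hq2
    have hc0 : 0 ≤ 2 * q - 1 + ξ := by linarith
    have : ∀ x ∈ Z, g x * y x ≤ g x * ((q + ξ) * k) -
        (if x ∈ S then (1 - h) * (2 * q - 1 + ξ) * k else 0)
        + if (q + ξ) * k < y x then (k : ℝ) else 0 := by
      intro x hx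
      by_cases hxS : x ∈ S
      · rw [if_pos hxS]
        have h1 := mul_le_mul_of_nonneg_left (hyS x hxS) (hgn x)
        have h2 := mul_le_mul_of_nonneg_right (hg0 x) (mul_nonneg hc0 hk)
        have h3 : 0 ≤ if (q + ξ) * k < y x then (k : ℝ) else 0 := by split_ifs <;> simp
        nlinarith
      · rw [if_neg hxS]
        split_ifs with hc
        · have := mul_nonneg (hgn x) (mul_nonneg (by linarith : 0 ≤ q + ξ) hk)
          nlinarith [hgn x, hg1 x, hy x hx]
        · have := mul_le_mul_of_nonneg_left (not_lt.1 hc) (hgn x); linarith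
    refine (Finset.sum_le_sum this).trans ?_
    rw [Finset.sum_add_distrib, Finset.sum_sub_distrib, ← Finset.sum_mul, Finset.sum_ite_mem,
      Finset.inter_eq_right.2 hS, Finset.sum_const, nsmul_eq_mul]
    have h1 : (∑ x ∈ Z, g x) * ((q + ξ) * k) ≤ (2 * h * (1 - h) + ω) * k * ((q + ξ) * k) := by
      gcongr
    have hd0 : 0 ≤ (1 - h) * (2 * q - 1 + ξ) * k :=
      mul_nonneg (mul_nonneg (by linarith) hc0) hk
    have h2 := mul_le_mul_of_nonneg_right hSc hd0
    have h3 : (2 * h * (1 - h) + ω) * (q + ξ) - (1 - h) * (2 * q - 1 + ξ) * (q - ξ)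
        ≤ 1 / 4 + 2 * ω + 3 * ξ := by
      have h4 := quarter_bound (q := q) hh hh1
      have e : (2 * h * (1 - h) + ω) * (q + ξ) - (1 - h) * (2 * q - 1 + ξ) * (q - ξ)
        = (1 - h) * q * (2 * h + 1 - 2 * q) + ω * q + ω * ξ
          + ξ * ((1 - h) * (2 * h + (2 * q - 1 + ξ) - q)) := by ring
      have h5 : (1 - h) * (2 * h + (2 * q - 1 + ξ) - q) ≤ (1 - h) * 3 :=
        mul_le_mul_of_nonneg_left (by linarith) (by linarith)
      have h6 := mul_le_mul_of_nonneg_left (h5.trans (by linarith : (1 - h) * 3 ≤ 3)) hξ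
      rw [e]
      nlinarith
    nlinarith [mul_le_mul_of_nonneg_right h3 hk2]

/-! ### A sparse pair of parts -/

/-- After cleaning, the edges between two parts are counted class by class; inside a class the
neighbourhood in the cleaned graph is a fixed set, so the density hypotheses apply. -/
lemma edges_le_weighted {V ι : Type} {T : V → V → Prop} {W B C P : Finset V} {cl : V → ι}
    {Q : ι → ι → Prop} {K : ℕ} (hK : #(W.image cl) ≤ K) (hB : B ⊆ W) {h e : ℝ} (he : 0 ≤ e)
    (h1 : ∀ X ⊆ P, ∀ Y ⊆ C, ec T X Y ≤ (1 - h) * #X * #Y + e)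
    (h2 : ∀ X ⊆ B, ∀ Y ⊆ C, ec T X Y ≤ h * #X * #Y + e) :
    ec (fun x y => T x y ∧ Q (cl x) (cl y)) B C ≤
      ∑ x ∈ B, (if x ∈ P then 1 - h else h) * (#{y ∈ C | Q (cl x) (cl y)} : ℝ) + 2 * K * e := by
  have hmap : ∀ x ∈ B, cl x ∈ W.image cl := fun x hx => Finset.mem_image_of_mem _ (hB hx)
  unfold ec at *
  rw [← Finset.sum_fiberwise_of_maps_to hmap, ← Finset.sum_fiberwise_of_maps_to hmap]
  have key : ∀ i ∈ W.image cl,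
      ∑ x ∈ B with cl x = i, (#{y ∈ C | T x y ∧ Q (cl x) (cl y)} : ℝ) ≤
      ∑ x ∈ B with cl x = i, (if x ∈ P then 1 - h else h) * (#{y ∈ C | Q (cl x) (cl y)} : ℝ)
        + 2 * e := by
    intro i _
    set Y := {y ∈ C | Q i (cl y)} with hY
    have hYC : Y ⊆ C := Finset.filter_subset _ _
    set U := {x ∈ B | cl x = i} with hU
    have hcl : ∀ x ∈ U, cl x = i := fun x hx => (Finset.mem_filter.1 hx).2
    have l1 : ∑ x ∈ U, (#{y ∈ C | T x y ∧ Q (cl x) (cl y)} : ℝ) = ∑ x ∈ U, (#{y ∈ Y | T x y} : ℝ) := by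
      refine Finset.sum_congr rfl fun x hx => ?_
      rw [hY, Finset.filter_filter]
      simp only [hcl x hx]
      congr 2
      ext y; simp [and_comm]
    have l2 : ∑ x ∈ U, (if x ∈ P then 1 - h else h) * (#{y ∈ C | Q (cl x) (cl y)} : ℝ) =
        (∑ x ∈ U, if x ∈ P then 1 - h else h) * #Y := by
      rw [Finset.sum_mul]
      refine Finset.sum_congr rfl fun x hx => ?_
      rw [hcl x hx]
    rw [l1, l2, ← Finset.sum_filter_add_sum_filter_not U (fun x => x ∈ P),
      ← Finset.sum_filter_add_sum_filter_not U (fun x => x ∈ P) (fun x => if x ∈ P then 1 - h else h)]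
    have m1 := h1 {x ∈ U | x ∈ P} (fun x hx => (Finset.mem_filter.1 hx).2) Y hYC
    have m2 := h2 {x ∈ U | ¬ x ∈ P}
      ((Finset.filter_subset _ _).trans (Finset.filter_subset _ _)) Y hYC
    have s1 : ∑ x ∈ U with x ∈ P, (if x ∈ P then 1 - h else h) = (1 - h) * #{x ∈ U | x ∈ P} := by
      rw [Finset.sum_congr rfl (g := fun _ => 1 - h)]
      · rw [Finset.sum_const, nsmul_eq_mul, mul_comm]
      · intro x hx; rw [if_pos (Finset.mem_filter.1 hx).2]
    have s2 : ∑ x ∈ U with ¬ x ∈ P, (if x ∈ P then 1 - h else h) = h * #{x ∈ U | ¬ x ∈ P} := by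
      rw [Finset.sum_congr rfl (g := fun _ => h)]
      · rw [Finset.sum_const, nsmul_eq_mul, mul_comm]
      · intro x hx; rw [if_neg (Finset.mem_filter.1 hx).2]
    rw [s1, s2]
    linarith
  refine le_trans (le_of_eq ?_) ((Finset.sum_le_sum key).trans ?_)
  · congr!
  rw [Finset.sum_add_distrib, Finset.sum_const, nsmul_eq_mul]
  have : (#(W.image cl) : ℝ) * (2 * e) ≤ K * (2 * e) := by gcongr
  linarith

/-- Let `T` be a triangle-free relation on `r` parts `Z i` such that pairs of parts have density
at most `h`, and at most `1 - h` from a subset `P i` of density `h`, uniformly on subrectangles. Then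
some pair of parts has density below `1/4 + ε`.

In the cleaned graph let `M a b` be the robust maximum degree from `Z a` into `Z b`. Ramsey's theorem
yields `a < b < c` with `M a b`, `M a c` attained by a common vertex `t ∈ Z a`, with `M a c ≲ M a b`
and `M b c ≲ M a c`. The neighbourhood of `t` in `Z b` then serves as the set `S` of
`weighted_sum_bound`, with `q = M a c / k`. -/
lemma exists_sparse_pair {ε : ℝ} (hε : 0 < ε) : ∃ r : ℕ, ∃ ω : ℝ, 0 < ω ∧
    ∀ (V : Type) (T : V → V → Prop), (∀ a b, T a b → T b a) →
    (∀ a b c, T a b → T a c → T b c → False) →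
    ∀ (I : Finset ℕ) (Z P : ℕ → Finset V) (k : ℕ) (h : ℝ), #I = r → 0 < k → (∀ i ∈ I, #(Z i) = k) →
    1 / 2 ≤ h → h ≤ 1 → (∀ i ∈ I, P i ⊆ Z i) → (∀ i ∈ I, (h - ω) * k ≤ #(P i)) →
    (∀ a ∈ I, ∀ b ∈ I, a < b → ∀ X ⊆ P a, ∀ Y ⊆ Z b, ec T X Y ≤ (1 - h) * #X * #Y + ω * k ^ 2) →
    (∀ a ∈ I, ∀ b ∈ I, a < b → ∀ X ⊆ Z a, ∀ Y ⊆ Z b, ec T X Y ≤ h * #X * #Y + ω * k ^ 2) →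
    ∃ b ∈ I, ∃ c ∈ I, b < c ∧ ec T (Z b) (Z c) < (1 / 4 + ε) * k ^ 2 := by
  set ρ : ℝ := min ε 1 / 16 with hρdef
  have hm : 0 < min ε 1 := lt_min hε one_pos
  have hρ : 0 < ρ := by positivity
  have hρε : ρ ≤ ε / 16 := by rw [hρdef]; gcongr; exact min_le_left _ _
  have hρ1 : ρ ≤ 1 / 16 := by rw [hρdef]; gcongr; exact min_le_right _ _
  set u : ℕ := ⌊1 / ρ⌋₊ + 3 with hu
  obtain ⟨N1, hN1⟩ := ramsey_avoid 3 u
  obtain ⟨N2, hN2⟩ := ramsey_avoid N1 u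
  obtain ⟨r, hr⟩ := ramsey_avoid N2 u
  obtain ⟨K, hK⟩ := exists_cleaning (η := ρ / (r + 1) ^ 2) (by positivity)
  refine ⟨r, ρ / (K + 1), by positivity, ?_⟩
  intro V T hsymm htri I Z P k h hI hk hZ hh hh1 hPZ hPc hPd hZd
  have hk' : (0 : ℝ) < k := by exact_mod_cast hk
  obtain ⟨ι, cl, Q, hQK, hQt, hcl⟩ := hK V T (I.biUnion Z) hsymm
    (fun a h => htri a a a h h h) htri
  set ω := ρ / (K + 1 : ℝ) with hω
  have hω0 : 0 < ω := by positivity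
  have hωρ : ω ≤ ρ := div_le_self hρ.le (by linarith [(Nat.cast_nonneg K : (0 : ℝ) ≤ K)])
  have hKω : K * ω ≤ ρ := by
    rw [hω, mul_div_assoc', div_le_iff₀ (by positivity)]; nlinarith
  -- degrees in the cleaned graph, and their robust maxima
  let v : ℕ → V → ℕ := fun b x => #{y ∈ Z b | Q (cl x) (cl y)}
  have hv : ∀ b ∈ I, ∀ x, v b x ≤ k := fun b hb x =>
    (Finset.card_filter_le _ _).trans (hZ b hb).le
  have hex : ∀ a b, ∃ M : ℕ, a ∈ I → b ∈ I → M ≤ k ∧ ρ * k ≤ #{x ∈ Z a | M ≤ v b x} ∧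
      (#{x ∈ Z a | M < v b x} : ℝ) < ρ * k := by
    intro a b
    by_cases hab : a ∈ I ∧ b ∈ I
    · obtain ⟨M, h1, h2, h3⟩ := exists_robust_max hk (hZ a hab.1) hρ (by linarith) (v b)
        (fun x _ => hv b hab.2 x)
      exact ⟨M, fun _ _ => ⟨h1, h2, h3⟩⟩
    · exact ⟨0, fun h1 h2 => absurd ⟨h1, h2⟩ hab⟩
  choose M hM using hex
  have hρk : 0 < ρ * k := by positivity
  have hkρ : (k : ℝ) / (ρ * k) = 1 / ρ := by field_simp
  -- a vertex attaining the maxima towards `b` and `c` simultaneously: otherwise there are too many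
  -- disjoint `ρ`-large subsets of `Z a`
  obtain ⟨I1, hI1, hI1c, hA⟩ := hr I hI.ge
    (fun a b c => ∃ t ∈ Z a, M a b ≤ v b t ∧ M a c ≤ v c t) (by
      intro J hJ hJu
      by_contra hcon
      push Not at hcon
      have hne : J.Nonempty := by rw [← Finset.card_pos]; omega
      set a := J.min' hne
      have ha : a ∈ J := Finset.min'_mem _ _
      have hlt : ∀ b ∈ J.erase a, a < b := fun b hb => Finset.min'_lt_of_mem_erase_min' _ _ hb
      have hdis : ∀ b ∈ J.erase a, ∀ c ∈ J.erase a, b ≠ c →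
          Disjoint {x ∈ Z a | M a b ≤ v b x} {x ∈ Z a | M a c ≤ v c x} := by
        intro b hb c hc hbc
        rw [Finset.disjoint_left]
        intro x hxb hxc
        rw [Finset.mem_filter] at hxb hxc
        rcases lt_or_gt_of_ne hbc with hl | hl
        · exact absurd hxc.2 (hcon a ha b (Finset.mem_of_mem_erase hb) c
            (Finset.mem_of_mem_erase hc) (hlt b hb) hl x hxb.1 hxb.2).not_ge
        · exact absurd hxb.2 (hcon a ha c (Finset.mem_of_mem_erase hc) b
            (Finset.mem_of_mem_erase hb) (hlt c hc) hl x hxb.1 hxc.2).not_ge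
      have h1 := Finset.card_biUnion hdis
      have h2 : #((J.erase a).biUnion fun b => {x ∈ Z a | M a b ≤ v b x}) ≤ k := by
        rw [← hZ a (hJ ha)]
        exact Finset.card_le_card (Finset.biUnion_subset.2 fun b _ => Finset.filter_subset _ _)
      rw [h1] at h2
      have h3 : #(J.erase a) • (ρ * k) ≤ ∑ b ∈ J.erase a, (#{x ∈ Z a | M a b ≤ v b x} : ℝ) :=
        Finset.card_nsmul_le_sum _ _ _ fun b hb =>
          (hM a b (hJ ha) (hJ (Finset.mem_of_mem_erase hb))).2.1
      have h4 : (∑ b ∈ J.erase a, (#{x ∈ Z a | M a b ≤ v b x} : ℝ)) ≤ k := by exact_mod_cast h2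
      rw [nsmul_eq_mul, Finset.card_erase_of_mem ha, hJu, hu] at h3
      have h5 := Nat.lt_floor_add_one (1 / ρ)
      rw [div_lt_iff₀ hρ] at h5
      push_cast [Nat.add_sub_assoc] at h3
      nlinarith)
  -- `M a b` cannot keep increasing in `b`, nor `M b c` in `b`
  obtain ⟨I2, hI2, hI2c, hB⟩ := hN2 I1 hI1c.ge
    (fun a b c => (M a c : ℝ) ≤ M a b + ρ * k) (by
      intro J hJ hJu
      by_contra hcon
      push Not at hcon
      have hne : J.Nonempty := by rw [← Finset.card_pos]; omega
      set a := J.min' hne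
      have ha : a ∈ J := Finset.min'_mem _ _
      have hlt : ∀ b ∈ J.erase a, a < b := fun b hb => Finset.min'_lt_of_mem_erase_min' _ _ hb
      have := card_separated_le (J := J.erase a) (f := fun b => (M a b : ℝ)) (k := k) hρk
        (fun b _ => Nat.cast_nonneg _)
        (fun b hb => by
          exact_mod_cast (hM a b (hI1 (hJ ha)) (hI1 (hJ (Finset.mem_of_mem_erase hb)))).1)
        (fun b hb c hc hbc => hcon a ha b (Finset.mem_of_mem_erase hb) c
          (Finset.mem_of_mem_erase hc) (hlt b hb) hbc)
      rw [hkρ, Finset.card_erase_of_mem ha] at this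
      omega)
  obtain ⟨I3, hI3, hI3c, hC⟩ := hN1 I2 hI2c.ge
    (fun a b c => (M b c : ℝ) ≤ M a c + ρ * k) (by
      intro J hJ hJu
      by_contra hcon
      push Not at hcon
      have hne : J.Nonempty := by rw [← Finset.card_pos]; omega
      set c := J.max' hne
      have hc : c ∈ J := Finset.max'_mem _ _
      have hlt : ∀ b ∈ J.erase c, b < c := fun b hb => Finset.lt_max'_of_mem_erase_max' _ _ hb
      have := card_separated_le (J := J.erase c) (f := fun b => (M b c : ℝ)) (k := k) hρk
        (fun b _ => Nat.cast_nonneg _)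
        (fun b hb => by
          exact_mod_cast (hM b c (hI1 (hI2 (hJ (Finset.mem_of_mem_erase hb))))
            (hI1 (hI2 (hJ hc)))).1)
        (fun a ha b hb hab => hcon a (Finset.mem_of_mem_erase ha) b
          (Finset.mem_of_mem_erase hb) c hc hab (hlt b hb))
      rw [hkρ, Finset.card_erase_of_mem hc] at this
      omega)
  obtain ⟨a, ha, b, hb, c, hc, hab, hbc⟩ := exists_increasing_triple hI3c
  obtain ⟨t, htZ, htb, htc⟩ := hA a (hI2 (hI3 ha)) b (hI2 (hI3 hb)) c (hI2 (hI3 hc)) hab hbc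
  have hBM := hB a (hI3 ha) b (hI3 hb) c (hI3 hc) hab hbc
  have hCM := hC a ha b hb c hc hab hbc
  have haI := hI1 (hI2 (hI3 ha))
  have hbI := hI1 (hI2 (hI3 hb))
  have hcI := hI1 (hI2 (hI3 hc))
  refine ⟨b, hbI, c, hcI, hbc, ?_⟩
  obtain ⟨hMk, -, -⟩ := hM a c haI hcI
  obtain ⟨-, -, hexc⟩ := hM b c hbI hcI
  have hMk' : (M a c : ℝ) ≤ k := by exact_mod_cast hMk
  -- `q` is the robust maximum density from part `a` to part `c`
  set q : ℝ := M a c / k with hq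
  have hqk : q * k = M a c := by rw [hq]; field_simp
  have hw := weighted_sum_bound (Z := Z b) (P := P b) (S := {x ∈ Z b | Q (cl t) (cl x)}) (k := k)
    (hZ b hbI) (hPZ b hbI) (Finset.filter_subset _ _) (h := h) (q := q) (ω := ω) (ξ := ρ) (ρ := ρ)
    hh hh1 (by positivity) (by rw [hq]; exact div_le_one_of_le₀ hMk' hk'.le) hω0.le hρ.le
    (by linarith) (hPc b hbI)
    (by
      have : (M a b : ℝ) ≤ v b t := by exact_mod_cast htb
      rw [sub_mul, hqk]
      linarith)
    (fun x => (v c x : ℝ)) (fun x _ => by exact_mod_cast hv c hcI x)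
    (by
      intro x hx
      have hx' := (Finset.mem_filter.1 hx).2
      -- the cleaned neighbourhoods of `t` and `x` in part `c` are disjoint
      have hd : Disjoint {y ∈ Z c | Q (cl x) (cl y)} {y ∈ Z c | Q (cl t) (cl y)} := by
        rw [Finset.disjoint_left]
        intro y hy1 hy2
        exact hQt _ _ _ hx' (Finset.mem_filter.1 hy2).2 (Finset.mem_filter.1 hy1).2
      have h1 : v c x + v c t ≤ k := by
        rw [← hZ c hcI]
        simp only [v]
        rw [← Finset.card_union_of_disjoint hd]
        exact Finset.card_le_card
          (Finset.union_subset (Finset.filter_subset _ _) (Finset.filter_subset _ _))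
      have h2 : (v c x : ℝ) + M a c ≤ k := by exact_mod_cast (by omega : v c x + M a c ≤ k)
      rw [sub_mul, hqk]; linarith)
    (by
      refine le_trans ?_ hexc.le
      exact_mod_cast Finset.card_le_card fun x hx => by
        rw [Finset.mem_filter] at hx ⊢
        refine ⟨hx.1, ?_⟩
        have := hx.2
        rw [add_mul, hqk] at this
        exact_mod_cast (by linarith : (M b c : ℝ) < v c x))
  have hsubB : Z b ⊆ I.biUnion Z := Finset.subset_biUnion_of_mem Z hbI
  have hsubC : Z c ⊆ I.biUnion Z := Finset.subset_biUnion_of_mem Z hcI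
  have he := edges_le_weighted (T := T) (B := Z b) (C := Z c) (P := P b) hQK hsubB (h := h)
    (e := ω * k ^ 2) (by positivity) (hPd b hbI c hcI hbc) (hZd b hbI c hcI hbc) (Q := Q)
  have hWc : (#(I.biUnion Z) : ℝ) ≤ r * k := by
    have : #(I.biUnion Z) ≤ #I * k := Finset.card_biUnion_le_card_mul _ _ _ fun i hi => (hZ i hi).le
    rw [hI] at this
    exact_mod_cast this
  have hrest : ec (fun x y => T x y ∧ ¬ Q (cl x) (cl y)) (Z b) (Z c) ≤ ρ * k ^ 2 := by
    refine (ec_mono_left hsubB).trans ((ec_mono_right hsubC).trans (hcl.trans ?_))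
    calc ρ / (r + 1) ^ 2 * (#(I.biUnion Z) : ℝ) ^ 2 ≤ ρ / (r + 1) ^ 2 * (r * k) ^ 2 := by gcongr
      _ ≤ ρ / (r + 1) ^ 2 * ((r + 1) * k) ^ 2 := by gcongr; linarith
      _ = ρ * k ^ 2 := by field_simp
  have htot := ec_le_add (R := T) (X := Z b) (Y := Z c)
    (S := fun x y => T x y ∧ Q (cl x) (cl y)) (T := fun x y => T x y ∧ ¬ Q (cl x) (cl y))
    (fun x _ y _ hT => by tauto)
  have hk2 : 0 < (k : ℝ) ^ 2 := by positivity
  simp only [v] at hw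
  have e1 : 2 * K * (ω * (k : ℝ) ^ 2) ≤ 2 * ρ * k ^ 2 := by
    have := mul_le_mul_of_nonneg_right hKω hk2.le; linarith
  have e2 : (1 / 4 + ρ + 2 * ω + 3 * ρ) * (k : ℝ) ^ 2 ≤ (1 / 4 + 6 * ρ) * k ^ 2 :=
    mul_le_mul_of_nonneg_right (by linarith) hk2.le
  have e3 : 9 * ρ * (k : ℝ) ^ 2 < ε * k ^ 2 := by gcongr; linarith
  linarith

/-! ### Hosts and the critical density -/

/-- `x`, `y`, `z` form an edge of `E`. -/
def Adj3 {n : ℕ} (E : Finset (Finset (Fin n))) (x y z : Fin n) : Prop :=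
  ({x, y, z} : Finset (Fin n)) ∈ E

/-- `A` is a large vertex set of the `K₄⁻`-free 3-graph `E` all of whose `η`-large subsets have
density at least `1/4 + ε`, and in which `h` bounds, up to an error `η |A|²`, the density of every
family of sets `S x ⊆ B` such that `S x` is independent in the link graph of `x`. -/
structure Host (ε η h : ℝ) {n : ℕ} (E : Finset (Finset (Fin n))) (A : Finset (Fin n)) : Prop where
  unif : ∀ e ∈ E, #e = 3
  free : ∀ s : Finset (Fin n), #s = 4 → ¬ 3 ≤ #{e ∈ E | e ⊆ s}
  big : 1 ≤ η * #A
  dens : ∀ A' ⊆ A, η * #A ≤ #A' →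
    (1 / 4 + ε) * ((#A').choose 3 : ℝ) ≤ (#{e ∈ E | e ⊆ A'} : ℝ)
  indep : ∀ X ⊆ A, ∀ B ⊆ A, Disjoint X B → ∀ S : Fin n → Fin n → Prop,
    (∀ x ∈ X, ∀ y ∈ B, ∀ y' ∈ B, S x y → S x y' → ¬ Adj3 E x y y') →
    ec S X B ≤ h * #X * #B + η * (#A : ℝ) ^ 2

section Adj3

variable {n : ℕ} {E : Finset (Finset (Fin n))} {x y z u : Fin n}

lemma adj3_swap12 : Adj3 E x y z ↔ Adj3 E y x z := by
  unfold Adj3; rw [Finset.insert_comm]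

lemma adj3_swap23 : Adj3 E x y z ↔ Adj3 E x z y := by
  unfold Adj3; rw [Finset.pair_comm]

lemma adj3_ne (hE : ∀ e ∈ E, #e = 3) (h : Adj3 E x y z) : x ≠ y ∧ x ≠ z ∧ y ≠ z := by
  have h3 := hE _ h
  refine ⟨?_, ?_, ?_⟩ <;> rintro rfl
  · have : #({x, x, z} : Finset (Fin n)) ≤ 2 := by simpa using Finset.card_le_two
    omega
  · have : #({x, y, x} : Finset (Fin n)) ≤ 2 := by
      rw [Finset.pair_comm y x]; simpa using Finset.card_le_two
    omega
  · have : #({x, y, y} : Finset (Fin n)) ≤ 2 := by simpa using Finset.card_le_two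
    omega

/-- Three edges through a common vertex `x` on four vertices form a `K₄⁻`. -/
lemma adj3_free (hE : ∀ e ∈ E, #e = 3) (hf : ∀ s : Finset (Fin n), #s = 4 → ¬ 3 ≤ #{e ∈ E | e ⊆ s})
    (h1 : Adj3 E x y z) (h2 : Adj3 E x y u) (h3 : Adj3 E x z u) : False := by
  obtain ⟨xy, xz, yz⟩ := adj3_ne hE h1
  obtain ⟨-, xu, yu⟩ := adj3_ne hE h2
  obtain ⟨-, -, zu⟩ := adj3_ne hE h3
  refine hf {x, y, z, u} (by simp [*]) ?_
  have hz : z ∉ ({x, y, u} : Finset (Fin n)) := by simp [*, Ne.symm xz, Ne.symm yz]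
  have hy : y ∉ ({x, z, u} : Finset (Fin n)) := by simp [*, Ne.symm xy]
  have hu : u ∉ ({x, y, z} : Finset (Fin n)) := by simp [*, Ne.symm xu, Ne.symm yu, Ne.symm zu]
  have h12 : ({x, y, z} : Finset (Fin n)) ≠ {x, y, u} := fun h => hz (h ▸ by simp)
  have h13 : ({x, y, z} : Finset (Fin n)) ≠ {x, z, u} := fun h => hy (h ▸ by simp)
  have h23 : ({x, y, u} : Finset (Fin n)) ≠ {x, z, u} := fun h => hy (h ▸ by simp)
  have h3 : #({{x, y, z}, {x, y, u}, {x, z, u}} : Finset (Finset (Fin n))) = 3 := by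
    simp [h12, h13, h23]
  rw [← h3]
  refine Finset.card_le_card fun e he => ?_
  simp only [Finset.mem_insert, Finset.mem_singleton] at he
  rw [Finset.mem_filter]
  rcases he with rfl | rfl | rfl
  · exact ⟨h1, by intro w; simp; tauto⟩
  · exact ⟨h2, by intro w; simp; tauto⟩
  · exact ⟨by assumption, by intro w; simp; tauto⟩

end Adj3

namespace Host

variable {ε η h : ℝ} {n : ℕ} {E : Finset (Finset (Fin n))} {A : Finset (Fin n)}

lemma mono (H : Host ε η h E A) {η' h' : ℝ} (hη : η ≤ η') (hh : h ≤ h') : Host ε η' h' E A where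
  unif := H.unif
  free := H.free
  big := H.big.trans (by gcongr)
  dens A' hA' hc := H.dens A' hA' (le_trans (by gcongr) hc)
  indep X hX B hB hd S hS := (H.indep X hX B hB hd S hS).trans (by gcongr)

lemma card_pos (H : Host ε η h E A) : (0 : ℝ) < #A := by
  rcases (Nat.cast_nonneg #A : (0 : ℝ) ≤ #A).lt_or_eq with h0 | h0
  · exact h0
  · have := H.big; rw [← h0] at this; norm_num at this

lemma eta_pos (H : Host ε η h E A) : 0 < η := by
  have h1 := H.big
  have h2 := H.card_pos
  by_contra hc
  nlinarith

lemma restrict (H : Host ε η h E A) {B : Finset (Fin n)} (hB : B ⊆ A) {κ η' : ℝ} (hκ : 0 < κ)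
    (hκ1 : κ ≤ 1) (hη' : 0 ≤ η') (hc : κ * #A ≤ #B) (hη : η ≤ η' * κ ^ 2) : Host ε η' h E B := by
  have hA := H.card_pos
  have key : η * #A ≤ η' * #B := by
    calc η * #A ≤ η' * κ ^ 2 * #A := by gcongr
      _ ≤ η' * κ * #A := by gcongr; nlinarith
      _ = η' * (κ * #A) := by ring
      _ ≤ η' * #B := by gcongr
  refine ⟨H.unif, H.free, H.big.trans key, fun A' hA' h' => H.dens A' (hA'.trans hB) (key.trans h'),
    fun X hX C hC hd S hS => (H.indep X (hX.trans hB) C (hC.trans hB) hd S hS).trans ?_⟩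
  have : η * (#A : ℝ) ^ 2 ≤ η' * (#B : ℝ) ^ 2 :=
    calc η * (#A : ℝ) ^ 2 ≤ η' * κ ^ 2 * (#A : ℝ) ^ 2 := by gcongr
      _ = η' * (κ * #A) ^ 2 := by ring
      _ ≤ η' * (#B : ℝ) ^ 2 := by gcongr
  linarith

/-- The codegree neighbourhoods `N(x, z)` are independent in the link of `x`, so their density is
controlled by `h`. -/
lemma codegree_le (H : Host ε η h E A) {X B : Finset (Fin n)} (hX : X ⊆ A) (hB : B ⊆ A)
    (hd : Disjoint X B) (z : Fin n) :
    ec (fun x y => Adj3 E x z y) X B ≤ h * #X * #B + η * (#A : ℝ) ^ 2 :=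
  H.indep X hX B hB hd _ fun _ _ _ _ _ _ h1 h2 h3 => adj3_free H.unif H.free h1 h2 h3

end Host

/-- The critical density `h`: hosts exist arbitrarily close above `h` but not below `h`
(unless `h = 1/2`). -/
lemma exists_critical {ε : ℝ} (hall : ∀ η : ℝ, 0 < η → ∃ (n : ℕ) (E : Finset (Finset (Fin n)))
    (A : Finset (Fin n)), Host ε η 1 E A) :
    ∃ h : ℝ, 1 / 2 ≤ h ∧ h ≤ 1 ∧
      (∀ η : ℝ, 0 < η → ∃ (n : ℕ) (E : Finset (Finset (Fin n))) (A : Finset (Fin n)),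
        Host ε η (h + η) E A) ∧
      (∀ ξ : ℝ, 0 < ξ → ξ ≤ h - 1 / 2 → ∃ η : ℝ, 0 < η ∧ ∀ (n : ℕ) (E : Finset (Finset (Fin n)))
        (A : Finset (Fin n)), ¬ Host ε η (h - ξ) E A) := by
  set Γ : Set ℝ := {h | 1 / 2 ≤ h ∧ ∀ η : ℝ, 0 < η → ∃ (n : ℕ) (E : Finset (Finset (Fin n)))
    (A : Finset (Fin n)), Host ε η h E A} with hΓ
  have h1 : (1 : ℝ) ∈ Γ := ⟨by norm_num, hall⟩
  have hbdd : BddBelow Γ := ⟨1 / 2, fun h hh => hh.1⟩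
  refine ⟨sInf Γ, le_csInf ⟨1, h1⟩ fun h hh => hh.1, csInf_le hbdd h1, ?_, ?_⟩
  · intro η hη
    obtain ⟨h, hh, hlt⟩ := exists_lt_of_csInf_lt ⟨1, h1⟩ (lt_add_of_pos_right (sInf Γ) hη)
    obtain ⟨n, E, A, H⟩ := hh.2 η hη
    exact ⟨n, E, A, H.mono le_rfl hlt.le⟩
  · intro ξ hξ hξ'
    by_contra hcon
    push Not at hcon
    have : sInf Γ - ξ ∈ Γ := ⟨by linarith, fun η hη => hcon η hη⟩
    linarith [csInf_le hbdd this]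

lemma exists_avg_left {α β : Type*} {R : α → β → Prop} {X : Finset α} {Y : Finset β} {c : ℝ} {k : ℕ}
    (hk : k ≤ #X) (h : c * #X * #Y ≤ ec R X Y) :
    ∃ X' ⊆ X, #X' = k ∧ c * #X' * #Y ≤ ec R X' Y := by
  obtain ⟨X', hX', hc, hle⟩ := exists_avg_subset (fun x => (#{y ∈ Y | R x y} : ℝ)) k X hk
  refine ⟨X', hX', hc, ?_⟩
  rcases Nat.eq_zero_or_pos (#X) with h0 | h0
  · have : #X' = 0 := by have := Finset.card_le_card hX'; omega
    rw [this]; simpa using ec_nonneg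
  · have h0' : (0 : ℝ) < #X := by exact_mod_cast h0
    change k * ec R X Y ≤ #X * ec R X' Y at hle
    have h1 := mul_le_mul_of_nonneg_left h (Nat.cast_nonneg k : (0 : ℝ) ≤ k)
    rw [hc]
    refine le_of_mul_le_mul_left ?_ h0'
    linarith

/-- A dense rectangle contains an equally dense square. -/
lemma exists_avg_square {α β : Type*} {R : α → β → Prop} {X : Finset α} {Y : Finset β} {c : ℝ}
    (h : c * #X * #Y ≤ ec R X Y) :
    ∃ X' ⊆ X, ∃ Y' ⊆ Y, #X' = min #X #Y ∧ #Y' = min #X #Y ∧ c * #X' * #Y' ≤ ec R X' Y' := by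
  obtain ⟨X', hX', hXc, h1⟩ := exists_avg_left (min_le_left #X #Y) h
  rw [ec_swap] at h1
  obtain ⟨Y', hY', hYc, h2⟩ := exists_avg_left (c := c) (min_le_right #X #Y) (by linarith)
  refine ⟨X', hX', Y', hY', hXc, hYc, ?_⟩
  rw [ec_swap]; linarith

/-- One step of the construction. If no host beats the critical density `h`, then either `h = 1/2`
or some family of independent sets `S x` has density close to `h`, hence nearly so on every
subrectangle. In both cases the relation `R` (for `h > 1/2`: `z ∈ S x`) has density at least `h`
and the codegree neighbourhoods of its pairs have density at most `1 - h`. -/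
lemma exists_step {ε h : ℝ} (hh : 1 / 2 ≤ h) (hh1 : h ≤ 1)
    (hcrit : ∀ ξ : ℝ, 0 < ξ → ξ ≤ h - 1 / 2 → ∃ η : ℝ, 0 < η ∧ ∀ (n : ℕ)
      (E : Finset (Finset (Fin n))) (A : Finset (Fin n)), ¬ Host ε η (h - ξ) E A)
    {ω : ℝ} (hω : 0 < ω) : ∃ κ : ℝ, 0 < κ ∧ κ ≤ 1 ∧ ∃ η : ℝ, 0 < η ∧ ∀ (n : ℕ)
      (E : Finset (Finset (Fin n))) (A : Finset (Fin n)), Host ε η (h + η) E A →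
      ∃ X ⊆ A, ∃ B ⊆ A, Disjoint X B ∧ #X = #B ∧ κ * #A ≤ #B ∧ ∃ R : Fin n → Fin n → Prop,
        (∀ X' ⊆ X, ∀ B' ⊆ B, h * #X' * #B' - ω * (#B : ℝ) ^ 2 ≤ ec R X' B') ∧
        (∀ z ∈ B, ∀ X' ⊆ X, (∀ x ∈ X', R x z) → ∀ B' ⊆ B,
          ec (fun x y => Adj3 E x z y) X' B' ≤ (1 - h) * #X' * #B' + ω * (#B : ℝ) ^ 2) := by
  have hbd : ∀ {n : ℕ} {X A : Finset (Fin n)}, X ⊆ A → (#X : ℝ) ≤ #A := fun hX => by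
    exact_mod_cast Finset.card_le_card hX
  rcases hh.eq_or_lt with rfl | hlt
  -- for `h = 1/2` the relation `True` works, as `codegree_le` gives the bound `1/2`
  · refine ⟨1 / 4, by norm_num, by norm_num, min (1 / 2) (ω / 32), by positivity, ?_⟩
    intro n E A H
    set η := min (1 / 2) (ω / 32) with hη
    have hη1 : η ≤ 1 / 2 := min_le_left _ _
    have hη2 : η ≤ ω / 32 := min_le_right _ _
    have hη0 := H.eta_pos
    have hA2 : 2 ≤ #A := by
      have := H.big
      have h0 := H.card_pos
      exact_mod_cast (by nlinarith : (2 : ℝ) ≤ #A)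
    obtain ⟨X, hX, hXc⟩ := Finset.exists_subset_card_eq (by omega : #A / 2 ≤ #A)
    have hsd := Finset.card_sdiff_of_subset hX
    obtain ⟨B, hB, hBc⟩ := Finset.exists_subset_card_eq (by omega : #A / 2 ≤ #(A \ X))
    have hBA := hB.trans Finset.sdiff_subset
    have hd : Disjoint X B := Finset.disjoint_of_subset_right hB Finset.disjoint_sdiff
    have hκ : 1 / 4 * (#A : ℝ) ≤ #B := by
      have : (#A : ℝ) ≤ 4 * #B := by exact_mod_cast (by omega : #A ≤ 4 * #B)
      linarith
    refine ⟨X, hX, B, hBA, hd, by omega, hκ, fun _ _ => True, ?_, ?_⟩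
    · intro X' _ B' _
      have : ec (fun _ _ => True) X' B' = #X' * #B' := by simp [ec]
      rw [this]
      have : (0 : ℝ) ≤ #X' * #B' := by positivity
      have : 0 ≤ ω * (#B : ℝ) ^ 2 := by positivity
      linarith
    · intro z _ X' hX' _ B' hB'
      refine (H.codegree_le (hX'.trans hX) (hB'.trans hBA)
        (Finset.disjoint_of_subset_left hX' (Finset.disjoint_of_subset_right hB' hd)) z).trans ?_
      have h1 : (#X' : ℝ) * #B' ≤ #A * #A := by
        gcongr
        · exact hX'.trans hX
        · exact hB'.trans hBA
      have h2 : (#A : ℝ) ^ 2 ≤ 16 * (#B : ℝ) ^ 2 := by nlinarith [H.card_pos]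
      have h3 := mul_le_mul_of_nonneg_left h1 hη0.le
      have h4 : η * (#A : ℝ) ^ 2 ≤ ω / 2 * (#B : ℝ) ^ 2 := by
        calc _ ≤ ω / 32 * (16 * (#B : ℝ) ^ 2) := by gcongr
          _ = _ := by ring
      nlinarith
  · set ξ := min (ω / 4) (h - 1 / 2) with hξ
    have hξ0 : 0 < ξ := lt_min (by positivity) (by linarith)
    have hξω : ξ ≤ ω / 4 := min_le_left _ _
    obtain ⟨η0, hη0, hno⟩ := hcrit ξ hξ0 (min_le_right _ _)
    set κ := min η0 1 with hκ
    have hκ0 : 0 < κ := lt_min hη0 one_pos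
    have hκη : κ ≤ η0 := min_le_left _ _
    refine ⟨κ, hκ0, min_le_right _ _, min η0 (ω * κ ^ 2 / 8), by positivity, ?_⟩
    intro n E A H
    set η := min η0 (ω * κ ^ 2 / 8) with hη
    have hηη : η ≤ η0 := min_le_left _ _
    have hηω : η ≤ ω * κ ^ 2 / 8 := min_le_right _ _
    have hηpos := H.eta_pos
    have hA := H.card_pos
    have H' := H.mono hηη le_rfl
    -- as `A` is not a host for a smaller density, some independent family is dense
    obtain ⟨X0, hX0, B0, hB0, hd0, S, hS, hlt⟩ : ∃ X ⊆ A, ∃ B ⊆ A, Disjoint X B ∧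
        ∃ S : Fin n → Fin n → Prop,
        (∀ x ∈ X, ∀ y ∈ B, ∀ y' ∈ B, S x y → S x y' → ¬ Adj3 E x y y') ∧
        (h - ξ) * #X * #B + η0 * (#A : ℝ) ^ 2 < ec S X B := by
      by_contra hcon
      push Not at hcon
      exact hno n E A ⟨H'.unif, H'.free, H'.big, H'.dens, hcon⟩
    have hpos : 0 ≤ h - ξ := by have := min_le_right (ω / 4) (h - 1 / 2); linarith
    have hprod : η0 * (#A : ℝ) ^ 2 ≤ #X0 * #B0 := by
      have h1 := ec_le_mul (R := S) (X := X0) (Y := B0)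
      have h2 : 0 ≤ (h - ξ) * #X0 * #B0 := by positivity
      linarith
    have hX0c : κ * #A ≤ #X0 := by
      have h1 : (#X0 : ℝ) * #B0 ≤ #X0 * #A := by gcongr
      nlinarith
    have hB0c : κ * #A ≤ #B0 := by
      have h1 : (#X0 : ℝ) * #B0 ≤ #A * #B0 := by gcongr
      nlinarith
    obtain ⟨X, hX, B, hB, hXc, hBc, hden⟩ := exists_avg_square (R := S) (X := X0) (Y := B0)
      (c := h - ξ) (by have : 0 ≤ η0 * (#A : ℝ) ^ 2 := by positivity
                       linarith)
    have hd : Disjoint X B := Finset.disjoint_of_subset_left hX (Finset.disjoint_of_subset_right hB hd0)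
    have hκB : κ * #A ≤ #B := by
      rw [hBc, Nat.cast_min]; exact le_min hX0c hB0c
    have hXA := hX.trans hX0
    have hBA := hB.trans hB0
    have hXB : #X = #B := by omega
    have hind : ∀ X' ⊆ X, ∀ B' ⊆ B, ec S X' B' ≤ (h + η) * #X' * #B' + η * (#A : ℝ) ^ 2 :=
      fun X' hX' B' hB' => H.indep X' (hX'.trans hXA) B' (hB'.trans hBA)
        (Finset.disjoint_of_subset_left hX' (Finset.disjoint_of_subset_right hB' hd)) S
        fun x hx y hy y' hy' => hS x (hX (hX' hx)) y (hB (hB' hy)) y' (hB (hB' hy'))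
    have herr : η * (#A : ℝ) ^ 2 ≤ ω / 8 * (#B : ℝ) ^ 2 := by
      calc _ ≤ ω * κ ^ 2 / 8 * (#A : ℝ) ^ 2 := by gcongr
        _ = ω / 8 * (κ * #A) ^ 2 := by ring
        _ ≤ _ := by gcongr
    -- the complement of a subrectangle cannot be denser than `h + η`, so the subrectangle is dense
    have hi : ∀ X' ⊆ X, ∀ B' ⊆ B, h * #X' * #B' - ω * (#B : ℝ) ^ 2 ≤ ec S X' B' := by
      intro X' hX' B' hB'
      have h1 := ec_sdiff_left (R := S) (Y := B) hX'
      have h2 := ec_sdiff_right (R := S) (X := X') hB'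
      have h3 := hind (X \ X') Finset.sdiff_subset B subset_rfl
      have h4 := hind X' hX' (B \ B') Finset.sdiff_subset
      rw [Finset.card_sdiff_of_subset hX', Nat.cast_sub (Finset.card_le_card hX'), hXB] at h3
      rw [Finset.card_sdiff_of_subset hB', Nat.cast_sub (Finset.card_le_card hB')] at h4
      rw [hXB] at hden
      have h5 : η * (#B : ℝ) ^ 2 ≤ η * (#A : ℝ) ^ 2 := by gcongr
      have h6 : 0 ≤ η * (#X' * #B') := by positivity
      have h7 : ξ * (#B : ℝ) ^ 2 ≤ ω / 4 * (#B : ℝ) ^ 2 := by gcongr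
      have h8 : 0 ≤ ω * (#B : ℝ) ^ 2 := by positivity
      nlinarith
    refine ⟨X, hXA, B, hBA, hd, hXB, hκB, S, hi, ?_⟩
    intro z hz X' hX' hR B' hB'
    have h1 : ec (fun x y => Adj3 E x z y) X' B' ≤ ec (fun x y => ¬ S x y) X' B' :=
      ec_mono fun x hx y hy hxy hSxy =>
        hS x (hX (hX' hx)) z (hB hz) y (hB (hB' hy)) (hR x hx) hSxy hxy
    have h2 := ec_not (R := S) (X := X') (Y := B')
    have h3 := hi X' hX' B' hB'
    linarith

/-! ### Sequences of uniform parts -/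

/-- Iterating `exists_step` inside the sets `B`: arbitrarily long sequences of disjoint sets of equal
size and a relation `R` between them that has density at least `h` on all subrectangles, while
codegree neighbourhoods of `R`-pairs have density at most `1 - h`. -/
lemma exists_sequence {ε h : ℝ} (hh : 1 / 2 ≤ h) (hh1 : h ≤ 1)
    (hcrit : ∀ ξ : ℝ, 0 < ξ → ξ ≤ h - 1 / 2 → ∃ η : ℝ, 0 < η ∧ ∀ (n : ℕ)
      (E : Finset (Finset (Fin n))) (A : Finset (Fin n)), ¬ Host ε η (h - ξ) E A)
    {ω : ℝ} (hω : 0 < ω) (m : ℕ) : ∃ κ : ℝ, 0 < κ ∧ κ ≤ 1 ∧ ∃ η : ℝ, 0 < η ∧ ∀ (n : ℕ)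
      (E : Finset (Finset (Fin n))) (A : Finset (Fin n)), Host ε η (h + η) E A →
      ∃ s : ℕ, κ * #A ≤ s ∧ s ≤ #A ∧ ∃ (X : ℕ → Finset (Fin n)) (R : Fin n → Fin n → Prop),
        (∀ i < m, X i ⊆ A ∧ #(X i) = s) ∧ (∀ a b, a < b → b < m → Disjoint (X a) (X b)) ∧
        (∀ a b, a < b → b < m → ∀ X' ⊆ X a, ∀ B' ⊆ X b,
          h * #X' * #B' - ω * (s : ℝ) ^ 2 ≤ ec R X' B') ∧
        (∀ a b c, a < b → b < m → a < c → c < m → ∀ z ∈ X c, ∀ X' ⊆ X a, (∀ x ∈ X', R x z) →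
          ∀ B' ⊆ X b,
          ec (fun x y => Adj3 E x z y) X' B' ≤ (1 - h) * #X' * #B' + ω * (s : ℝ) ^ 2) := by
  induction m with
  | zero =>
    exact ⟨1, one_pos, le_rfl, 1, one_pos, fun n E A _ => ⟨#A, by simp, le_rfl, fun _ => ∅,
      fun _ _ => True, by simp, by simp, by simp, by simp⟩⟩
  | succ m ih =>
    obtain ⟨κm, hκm, hκm1, ηm, hηm, ih⟩ := ih
    obtain ⟨κ1, hκ1, hκ11, η1, hη1, hstep⟩ := exists_step (ε := ε) hh hh1 hcrit
      (ω := ω * κm ^ 2) (by positivity)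
    refine ⟨κm * κ1, by positivity, mul_le_one₀ hκm1 hκ1.le hκ11, min η1 (ηm * κ1 ^ 2),
      by positivity, ?_⟩
    intro n E A H
    set η := min η1 (ηm * κ1 ^ 2) with hη
    have hη1' : η ≤ η1 := min_le_left _ _
    have hηm' : η ≤ ηm * κ1 ^ 2 := min_le_right _ _
    obtain ⟨X, hX, B, hB, hd, hXB, hκB, R, hR1, hR2⟩ :=
      hstep n E A (H.mono hη1' (by linarith))
    have hηm2 : η ≤ ηm := hηm'.trans (mul_le_of_le_one_right hηm.le (pow_le_one₀ hκ1.le hκ11))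
    obtain ⟨s, hs, hsB, X', R', hX', hdis, hi, hii⟩ := ih n E B
      ((H.restrict hB hκ1 hκ11 hηm.le hκB hηm').mono le_rfl (by linarith))
    obtain ⟨X0, hX0, hX0c⟩ := Finset.exists_subset_card_eq (hXB ▸ hsB : s ≤ #X)
    have herr : ω * κm ^ 2 * (#B : ℝ) ^ 2 ≤ ω * (s : ℝ) ^ 2 := by
      calc _ = ω * (κm * #B) ^ 2 := by ring
        _ ≤ _ := by gcongr
    have hnX : ∀ i < m, ∀ x ∈ X' i, x ∉ X := fun i hi x hx hxX =>
      Finset.disjoint_left.1 hd hxX ((hX' i hi).1 hx)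
    refine ⟨s, ?_, hsB.trans (Finset.card_le_card hB), fun i => Nat.casesOn i X0 X',
      fun x y => if x ∈ X then R x y else R' x y, ?_, ?_, ?_, ?_⟩
    · calc κm * κ1 * #A = κm * (κ1 * #A) := by ring
        _ ≤ κm * #B := by gcongr
        _ ≤ s := hs
    · rintro (_ | i) hi'
      · exact ⟨hX0.trans hX, hX0c⟩
      · exact ⟨(hX' i (by omega)).1.trans hB, (hX' i (by omega)).2⟩
    · rintro (_ | a) (_ | b) hab hb
      · omega
      · exact Finset.disjoint_of_subset_left hX0
          (Finset.disjoint_of_subset_right (hX' b (by omega)).1 hd)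
      · omega
      · exact hdis a b (by omega) (by omega)
    · rintro (_ | a) (_ | b) hab hb Y hY C hC
      · omega
      · rw [ec_congr (S := R) fun x hx y _ => by rw [if_pos (hX0 (hY hx))]]
        have := hR1 Y (hY.trans hX0) C (hC.trans (hX' b (by omega)).1)
        linarith
      · omega
      · rw [ec_congr (S := R') fun x hx y _ => by rw [if_neg (hnX a (by omega) x (hY hx))]]
        exact hi a b (by omega) (by omega) Y hY C hC
    · rintro (_ | a) (_ | b) (_ | c) hab hb hac hc z hz Y hY hR C hC
      any_goals omega
      · have := hR2 z ((hX' c (by omega)).1 hz) Y (hY.trans hX0)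
          (fun x hx => by simpa [hX0 (hY hx)] using hR x hx) C (hC.trans (hX' b (by omega)).1)
        linarith
      · exact hii a b c (by omega) (by omega) (by omega) (by omega) z hz Y hY
          (fun x hx => by simpa [hnX a (by omega) x (hY hx)] using hR x hx) C hC

/-- Equal-sized subsets `Z c ⊆ X c` in which every vertex has large `R`-degree to the earlier sets
and all vertices of a set agree on the truth of `F z (Z a) (Z b)` for `a < b < c`. -/
lemma exists_uniform_subsets {n m s k : ℕ} {X : ℕ → Finset (Fin n)} {R : Fin n → Fin n → Prop}
    (F : Fin n → Finset (Fin n) → Finset (Fin n) → Prop) {h ω ω' : ℝ}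
    (hX : ∀ i < m, #(X i) = s)
    (hR : ∀ a b, a < b → b < m → ∀ X' ⊆ X a, ∀ B' ⊆ X b,
      h * #X' * #B' - ω * (s : ℝ) ^ 2 ≤ ec R X' B')
    (hk : 0 < k) (hω' : 0 < ω') (hks : 2 * (2 ^ (m * m) * k) ≤ s) (hω : 2 * m * ω * s ≤ ω' * k) :
    ∀ l ≤ m, ∃ Z : ℕ → Finset (Fin n), ∀ c < l, Z c ⊆ X c ∧ #(Z c) = k ∧
      (∀ a < c, ∀ z ∈ Z c, (h - ω') * k ≤ #{x ∈ Z a | R x z}) ∧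
      (∀ a b, a < b → b < c → ∀ z ∈ Z c, ∀ z' ∈ Z c, (F z (Z a) (Z b) ↔ F z' (Z a) (Z b))) := by
  intro l
  induction l with
  | zero => exact fun _ => ⟨fun _ => ∅, by simp⟩
  | succ l ih =>
    intro hlm
    obtain ⟨Z, hZ⟩ := ih (by omega)
    have hk' : (0 : ℝ) < k := by exact_mod_cast hk
    let Bad : ℕ → Finset (Fin n) := fun a => {z ∈ X l | (#{x ∈ Z a | R x z} : ℝ) < (h - ω') * k}
    have hBad : ∀ a < l, #(Bad a) * (ω' * k) ≤ ω * (s : ℝ) ^ 2 := by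
      intro a ha
      have h1 := hR a l ha (by omega) (Z a) (hZ a ha).1 (Bad a) (Finset.filter_subset _ _)
      rw [ec_swap] at h1
      have h2 : ec (fun y x => R x y) (Bad a) (Z a) ≤ #(Bad a) • ((h - ω') * k) :=
        Finset.sum_le_card_nsmul _ _ _ fun z hz => (Finset.mem_filter.1 hz).2.le
      rw [nsmul_eq_mul] at h2
      rw [(hZ a ha).2.1] at h1
      linarith
    have hU : 2 * #((Finset.range l).biUnion Bad) ≤ s := by
      have h1 : (#((Finset.range l).biUnion Bad) : ℝ) ≤ ∑ a ∈ Finset.range l, (#(Bad a) : ℝ) := by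
        exact_mod_cast Finset.card_biUnion_le
      have h2 : (∑ a ∈ Finset.range l, (#(Bad a) : ℝ)) * (ω' * k) ≤ l * (ω * (s : ℝ) ^ 2) := by
        rw [Finset.sum_mul]
        calc _ ≤ ∑ a ∈ Finset.range l, ω * (s : ℝ) ^ 2 :=
              Finset.sum_le_sum fun a ha => hBad a (Finset.mem_range.1 ha)
          _ = _ := by simp
      have hpos : 0 < ω' * k := by positivity
      have hlm' : (l : ℝ) ≤ m := by exact_mod_cast (by omega : l ≤ m)
      have h3 : (l : ℝ) * (ω * (s : ℝ) ^ 2) * 2 ≤ s * (ω' * k) := by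
        rcases le_total 0 ω with h0 | h0
        · calc (l : ℝ) * (ω * (s : ℝ) ^ 2) * 2 ≤ m * (ω * (s : ℝ) ^ 2) * 2 := by gcongr
            _ = s * (2 * m * ω * s) := by ring
            _ ≤ _ := by gcongr
        · calc (l : ℝ) * (ω * (s : ℝ) ^ 2) * 2 ≤ 0 := by
                have := mul_nonneg (Nat.cast_nonneg l : (0 : ℝ) ≤ l) (sq_nonneg (s : ℝ))
                nlinarith
            _ ≤ _ := by positivity
      have h4 : (2 * #((Finset.range l).biUnion Bad) : ℝ) * (ω' * k) ≤ s * (ω' * k) := by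
        nlinarith [mul_le_mul_of_nonneg_right h1 hpos.le]
      exact_mod_cast le_of_mul_le_mul_right h4 hpos
    set Gd := X l \ (Finset.range l).biUnion Bad with hGd
    have hGdc : s ≤ 2 * #Gd := by
      have h1 : #(X l) ≤ #(Gd ∪ (Finset.range l).biUnion Bad) := Finset.card_le_card fun z hz => by
        by_cases hzU : z ∈ (Finset.range l).biUnion Bad
        · exact Finset.mem_union_right _ hzU
        · exact Finset.mem_union_left _ (Finset.mem_sdiff.2 ⟨hz, hzU⟩)
      have h2 := h1.trans (Finset.card_union_le _ _)
      rw [hX l (by omega)] at h2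
      omega
    -- pigeonhole on the set of pairs `(a, b)` for which `F z (Z a) (Z b)` holds
    let pat : Fin n → Finset (ℕ × ℕ) := fun z =>
      {p ∈ Finset.range m ×ˢ Finset.range m | F z (Z p.1) (Z p.2)}
    obtain ⟨p, -, hp⟩ := Finset.exists_le_card_fiber_of_mul_le_card_of_maps_to (s := Gd)
      (t := (Finset.range m ×ˢ Finset.range m).powerset) (f := pat) (n := k)
      (fun z _ => Finset.mem_powerset.2 (Finset.filter_subset _ _)) ⟨∅, by simp⟩
      (by rw [Finset.card_powerset, Finset.card_product, Finset.card_range]; omega)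
    obtain ⟨Zl, hZl, hZlc⟩ := Finset.exists_subset_card_eq hp
    have hZl' : ∀ z ∈ Zl, z ∈ Gd ∧ pat z = p := fun z hz => Finset.mem_filter.1 (hZl hz)
    refine ⟨Function.update Z l Zl, fun c hc => ?_⟩
    rcases (Nat.lt_succ_iff_lt_or_eq.1 hc) with hcl | rfl
    · have hne : ∀ a, a ≤ c → Function.update Z l Zl a = Z a := fun a ha =>
        Function.update_of_ne (by omega) _ _
      rw [hne c le_rfl]
      obtain ⟨h1, h2, h3, h4⟩ := hZ c hcl
      refine ⟨h1, h2, fun a ha z hz => ?_, fun a b hab hbc z hz z' hz' => ?_⟩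
      · rw [hne a ha.le]; exact h3 a ha z hz
      · rw [hne a (by omega), hne b hbc.le]; exact h4 a b hab hbc z hz z' hz'
    · have hne : ∀ a, a < c → Function.update Z c Zl a = Z a := fun a ha =>
        Function.update_of_ne ha.ne _ _
      rw [Function.update_self]
      refine ⟨fun z hz => (Finset.mem_sdiff.1 (hZl' z hz).1).1, hZlc,
        fun a ha z hz => ?_, fun a b hab hbc z hz z' hz' => ?_⟩
      · rw [hne a ha]
        obtain ⟨hzX, hzU⟩ := Finset.mem_sdiff.1 (hZl' z hz).1
        by_contra hcon
        exact hzU (Finset.mem_biUnion.2 ⟨a, Finset.mem_range.2 ha,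
          Finset.mem_filter.2 ⟨hzX, not_le.1 hcon⟩⟩)
      · rw [hne a (by omega), hne b hbc]
        have hmem : ∀ w ∈ Zl, (F w (Z a) (Z b) ↔ (a, b) ∈ p) := fun w hw => by
          rw [← (hZl' w hw).2, Finset.mem_filter]
          simp only [Finset.mem_product, Finset.mem_range]
          exact ⟨fun h => ⟨⟨by omega, by omega⟩, h⟩, fun h => h.2⟩
        rw [hmem z hz, hmem z' hz']

/-! ### Counting edges in a union of parts -/

/-- The number of ordered edges `(x, y, z) ∈ A × B × C`. -/
noncomputable def tc {n : ℕ} (E : Finset (Finset (Fin n))) (A B C : Finset (Fin n)) : ℝ :=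
  ∑ z ∈ C, ec (fun x y => Adj3 E x z y) A B

section Triples

variable {n : ℕ} {E : Finset (Finset (Fin n))} {A B C : Finset (Fin n)}

lemma tc_eq_sum : tc E A B C = ∑ x ∈ A, ∑ y ∈ B, ∑ z ∈ C, if Adj3 E x y z then (1 : ℝ) else 0 := by
  unfold tc
  simp only [ec_eq_sum]
  rw [Finset.sum_comm]
  refine Finset.sum_congr rfl fun x _ => ?_
  rw [Finset.sum_comm]
  simp only [adj3_swap23]

lemma tc_swap12 : tc E A B C = tc E B A C := by
  rw [tc_eq_sum, tc_eq_sum, Finset.sum_comm]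
  refine Finset.sum_congr rfl fun y _ => Finset.sum_congr rfl fun x _ =>
    Finset.sum_congr rfl fun z _ => ?_
  rw [adj3_swap12]

lemma tc_swap23 : tc E A B C = tc E A C B := by
  rw [tc_eq_sum, tc_eq_sum]
  refine Finset.sum_congr rfl fun x _ => ?_
  rw [Finset.sum_comm]
  simp only [adj3_swap23]

lemma tc_le : tc E A B C ≤ #C * (#A * #B) := by
  unfold tc
  rw [← nsmul_eq_mul]
  exact Finset.sum_le_card_nsmul _ _ _ fun z _ => ec_le_mul

/-- Every edge gives six ordered edges. -/
lemma six_mul_card_le_tc (hE : ∀ e ∈ E, #e = 3) : 6 * (#{e ∈ E | e ⊆ A} : ℝ) ≤ tc E A A A := by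
  set S : Finset (Fin n × Fin n × Fin n) := {p ∈ A ×ˢ A ×ˢ A | Adj3 E p.1 p.2.1 p.2.2} with hS
  have h1 : tc E A A A = #S := by
    rw [tc_eq_sum, hS, Finset.card_filter, Finset.sum_product]
    push_cast
    refine Finset.sum_congr rfl fun x _ => ?_
    rw [Finset.sum_product]
  rw [h1]
  have hmap : ∀ p ∈ S, ({p.1, p.2.1, p.2.2} : Finset (Fin n)) ∈ ({e ∈ E | e ⊆ A} : Finset _) := by
    rintro ⟨x, y, z⟩ hp
    simp only [hS, Finset.mem_filter, Finset.mem_product] at hp ⊢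
    refine ⟨hp.2, ?_⟩
    intro w hw
    simp only [Finset.mem_insert, Finset.mem_singleton] at hw
    rcases hw with rfl | rfl | rfl <;> tauto
  have h2 : #{e ∈ E | e ⊆ A} * 6 ≤ #S := by
    rw [Finset.card_eq_sum_card_fiberwise hmap, ← smul_eq_mul]
    refine Finset.card_nsmul_le_sum _ _ _ fun e he => ?_
    obtain ⟨heE, heA⟩ := Finset.mem_filter.1 he
    obtain ⟨x, y, z, hxy, hxz, hyz, rfl⟩ := Finset.card_eq_three.1 (hE e heE)
    have hx : x ∈ A := heA (by simp)
    have hy : y ∈ A := heA (by simp)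
    have hz : z ∈ A := heA (by simp)
    have h6 : #({(x, y, z), (x, z, y), (y, x, z), (y, z, x), (z, x, y), (z, y, x)} :
        Finset (Fin n × Fin n × Fin n)) = 6 := by
      simp [hxy, hxz, hyz, hxy.symm, hxz.symm, hyz.symm]
    rw [← h6]
    refine Finset.card_le_card fun p hp => ?_
    have e2 : ({x, z, y} : Finset (Fin n)) = {x, y, z} := by rw [Finset.pair_comm z y]
    have e3 : ({y, x, z} : Finset (Fin n)) = {x, y, z} := Finset.insert_comm _ _ _
    have e4 : ({y, z, x} : Finset (Fin n)) = {x, y, z} := by rw [Finset.pair_comm z x, e3]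
    have e5 : ({z, x, y} : Finset (Fin n)) = {x, y, z} := by rw [Finset.insert_comm, e2]
    have e6 : ({z, y, x} : Finset (Fin n)) = {x, y, z} := by rw [Finset.pair_comm y x, e5]
    simp only [Finset.mem_insert, Finset.mem_singleton] at hp
    rw [Finset.mem_filter, hS, Finset.mem_filter]
    simp only [Finset.mem_product]
    rcases hp with rfl | rfl | rfl | rfl | rfl | rfl <;>
      simp only [Adj3, hx, hy, hz, e2, e3, e4, e5, e6, heE, and_self]
  have : (#{e ∈ E | e ⊆ A} : ℝ) * 6 ≤ #S := by exact_mod_cast h2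
  linarith

/-- If all transversal triples of parts have density at most `θ`, so has the union of the parts,
up to the triples that are not transversal. -/
lemma card_edges_biUnion_le (hE : ∀ e ∈ E, #e = 3) {I : Finset ℕ} {Z : ℕ → Finset (Fin n)}
    {k : ℕ} {θ : ℝ} (hθ : 0 ≤ θ) (hZ : ∀ i ∈ I, #(Z i) = k)
    (hd : ∀ a ∈ I, ∀ b ∈ I, a ≠ b → Disjoint (Z a) (Z b))
    (hs : ∀ a ∈ I, ∀ b ∈ I, ∀ c ∈ I, a < b → b < c → ∀ z ∈ Z c,
      ec (fun x y => Adj3 E x z y) (Z a) (Z b) ≤ θ * (k : ℝ) ^ 2) :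
    6 * (#{e ∈ E | e ⊆ I.biUnion Z} : ℝ) ≤
      (θ * (#I : ℝ) ^ 3 + 3 * (#I : ℝ) ^ 2) * (k : ℝ) ^ 3 := by
  refine (six_mul_card_le_tc hE).trans ?_
  have hd' : (I : Set ℕ).PairwiseDisjoint Z := fun a ha b hb hab => hd a ha b hb hab
  have hsplit : tc E (I.biUnion Z) (I.biUnion Z) (I.biUnion Z) =
      ∑ a ∈ I, ∑ b ∈ I, ∑ c ∈ I, tc E (Z a) (Z b) (Z c) := by
    have hC : ∀ A B : Finset (Fin n), tc E A B (I.biUnion Z) = ∑ c ∈ I, tc E A B (Z c) :=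
      fun A B => Finset.sum_biUnion hd'
    have hB : ∀ A C : Finset (Fin n), tc E A (I.biUnion Z) C = ∑ b ∈ I, tc E A (Z b) C :=
      fun A C => by
        rw [tc_swap23, hC]
        exact Finset.sum_congr rfl fun b _ => tc_swap23
    have hA : ∀ B C : Finset (Fin n), tc E (I.biUnion Z) B C = ∑ a ∈ I, tc E (Z a) B C :=
      fun B C => by
        rw [tc_swap12, hB]
        exact Finset.sum_congr rfl fun b _ => tc_swap12
    rw [hA]
    refine Finset.sum_congr rfl fun a _ => ?_
    rw [hB]
    exact Finset.sum_congr rfl fun b _ => hC _ _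
  have h1 : ∀ a ∈ I, ∀ b ∈ I, ∀ c ∈ I, a < b → b < c →
      tc E (Z a) (Z b) (Z c) ≤ θ * (k : ℝ) ^ 3 := by
    intro a ha b hb c hc hab hbc
    unfold tc
    calc _ ≤ #(Z c) • (θ * (k : ℝ) ^ 2) :=
          Finset.sum_le_card_nsmul _ _ _ fun z hz => hs a ha b hb c hc hab hbc z hz
      _ = _ := by rw [hZ c hc, nsmul_eq_mul]; ring
  have h2 : ∀ a ∈ I, ∀ b ∈ I, ∀ c ∈ I, tc E (Z a) (Z b) (Z c) ≤ θ * (k : ℝ) ^ 3 +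
      ((if a = b then (k : ℝ) ^ 3 else 0) + (if a = c then (k : ℝ) ^ 3 else 0) +
        (if b = c then (k : ℝ) ^ 3 else 0)) := by
    intro a ha b hb c hc
    have hk3 : (0 : ℝ) ≤ (k : ℝ) ^ 3 := by positivity
    have hθk : (0 : ℝ) ≤ θ * (k : ℝ) ^ 3 := by positivity
    by_cases hne : a = b ∨ a = c ∨ b = c
    · have h3 : tc E (Z a) (Z b) (Z c) ≤ (k : ℝ) ^ 3 := by
        refine tc_le.trans (le_of_eq ?_)
        rw [hZ a ha, hZ b hb, hZ c hc]; ring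
      have h4 : (k : ℝ) ^ 3 ≤ (if a = b then (k : ℝ) ^ 3 else 0) + (if a = c then (k : ℝ) ^ 3 else 0) +
          (if b = c then (k : ℝ) ^ 3 else 0) := by
        split_ifs <;> first | tauto | linarith
      linarith
    · push Not at hne
      rw [if_neg hne.1, if_neg hne.2.1, if_neg hne.2.2]
      simp only [add_zero]
      rcases lt_or_gt_of_ne hne.1 with h | h <;> rcases lt_or_gt_of_ne hne.2.1 with h' | h' <;>
        rcases lt_or_gt_of_ne hne.2.2 with h'' | h''
      · exact h1 a ha b hb c hc h h''
      · rw [tc_swap23]; exact h1 a ha c hc b hb h' h''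
      · omega
      · rw [tc_swap23, tc_swap12]; exact h1 c hc a ha b hb h' h
      · rw [tc_swap12]; exact h1 b hb a ha c hc h h'
      · omega
      · rw [tc_swap12, tc_swap23]; exact h1 b hb c hc a ha h'' h'
      · rw [tc_swap12, tc_swap23, tc_swap12]; exact h1 c hc b hb a ha h'' h
  rw [hsplit]
  refine (Finset.sum_le_sum fun a ha => Finset.sum_le_sum fun b hb => Finset.sum_le_sum
    fun c hc => h2 a ha b hb c hc).trans (le_of_eq ?_)
  have e1 : ∀ a ∈ I, ∑ b ∈ I, (if a = b then (k : ℝ) ^ 3 else 0) = (k : ℝ) ^ 3 := fun a ha => by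
    rw [Finset.sum_ite_eq, if_pos ha]
  have e2 : ∀ a ∈ I, ∀ b ∈ I, ∑ c ∈ I, (θ * (k : ℝ) ^ 3 + ((if a = b then (k : ℝ) ^ 3 else 0) +
      (if a = c then (k : ℝ) ^ 3 else 0) + (if b = c then (k : ℝ) ^ 3 else 0))) =
      #I * (θ * (k : ℝ) ^ 3) + 2 * (k : ℝ) ^ 3 + #I * (if a = b then (k : ℝ) ^ 3 else 0) := by
    intro a ha b hb
    rw [Finset.sum_add_distrib, Finset.sum_add_distrib, Finset.sum_add_distrib, e1 a ha, e1 b hb,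
      Finset.sum_const, Finset.sum_const, nsmul_eq_mul, nsmul_eq_mul]
    ring
  rw [Finset.sum_congr rfl fun a ha => Finset.sum_congr rfl fun b hb => e2 a ha b hb]
  have e3 : ∀ a ∈ I, ∑ b ∈ I, (#I * (θ * (k : ℝ) ^ 3) + 2 * (k : ℝ) ^ 3 +
      #I * (if a = b then (k : ℝ) ^ 3 else 0)) =
      #I * (#I * (θ * (k : ℝ) ^ 3) + 2 * (k : ℝ) ^ 3) + #I * (k : ℝ) ^ 3 := by
    intro a ha
    rw [Finset.sum_add_distrib, ← Finset.mul_sum, e1 a ha, Finset.sum_const, nsmul_eq_mul]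
  rw [Finset.sum_congr rfl e3, Finset.sum_const, nsmul_eq_mul]
  ring

end Triples

/-! ### Conclusion -/

lemma le_six_mul_choose_three (N : ℕ) : (N : ℝ) ^ 3 - 3 * (N : ℝ) ^ 2 ≤ 6 * (N.choose 3 : ℝ) := by
  induction N with
  | zero => simp
  | succ N ih =>
    rw [Nat.choose_succ_succ' N 2]
    push_cast
    rw [Nat.cast_choose_two]
    linarith

/-- The edge count of a union of `t` parts of size `k` whose transversal triples have density below
`1/4 + ε/2` contradicts the density `1/4 + ε` of the host, once `t` is large. -/
lemma sparse_union_false {ε : ℝ} (hε : 0 < ε) {t k : ℕ} (hk : 0 < k) (ht : 8 / ε + 8 ≤ t) {e : ℝ}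
    (h1 : 6 * e ≤ ((1 / 4 + ε / 2) * (t : ℝ) ^ 3 + 3 * (t : ℝ) ^ 2) * (k : ℝ) ^ 3)
    (h2 : (1 / 4 + ε) * ((t * k).choose 3 : ℝ) ≤ e) : False := by
  have hk1 : (1 : ℝ) ≤ k := by exact_mod_cast hk
  have ht0 : (0 : ℝ) < t := by have : 0 < 8 / ε := by positivity
                               linarith
  have h3 := le_six_mul_choose_three (t * k)
  push_cast at h3
  have h4 : (1 / 4 + ε) * (((t : ℝ) * k) ^ 3 - 3 * ((t : ℝ) * k) ^ 2) ≤
      ((1 / 4 + ε / 2) * (t : ℝ) ^ 3 + 3 * (t : ℝ) ^ 2) * (k : ℝ) ^ 3 := by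
    have := mul_le_mul_of_nonneg_left h3 (by positivity : 0 ≤ 1 / 4 + ε)
    linarith
  have h5 : ((t : ℝ) * k) ^ 2 ≤ (t : ℝ) ^ 2 * (k : ℝ) ^ 3 := by
    rw [mul_pow]
    exact mul_le_mul_of_nonneg_left (pow_le_pow_right₀ hk1 (by norm_num)) (by positivity)
  have h6 := mul_le_mul_of_nonneg_left h5 (by positivity : 0 ≤ 3 * (1 / 4 + ε))
  have h7 : ((t : ℝ) ^ 2 * (k : ℝ) ^ 3) * (ε / 2 * t) ≤
      ((t : ℝ) ^ 2 * (k : ℝ) ^ 3) * (3 + 3 * (1 / 4 + ε)) := by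
    nlinarith
  have h8 : ε / 2 * t ≤ 3 + 3 * (1 / 4 + ε) := le_of_mul_le_mul_left h7 (by positivity)
  have h9 : ε / 2 * (8 / ε + 8) ≤ ε / 2 * t := by gcongr
  have h10 : ε / 2 * (8 / ε + 8) = 4 + 4 * ε := by field_simp; ring
  linarith

set_option maxHeartbeats 400000 in
/-- Hosts with arbitrarily small error do not exist: each sequence of parts built inside a host near
the critical density contradicts `exists_sparse_pair` or `sparse_union_false`. -/
lemma no_hosts {ε : ℝ} (hε : 0 < ε) (hall : ∀ η : ℝ, 0 < η → ∃ (n : ℕ)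
    (E : Finset (Finset (Fin n))) (A : Finset (Fin n)), Host ε η 1 E A) : False := by
  obtain ⟨h, hh, hh1, hex, hcrit⟩ := exists_critical hall
  obtain ⟨r, ω', hω', hsp⟩ := exists_sparse_pair (half_pos hε)
  obtain ⟨t, htr, htε⟩ : ∃ t : ℕ, r + 1 ≤ t ∧ 8 / ε + 8 ≤ t :=
    ⟨max (r + 1) (⌈8 / ε⌉₊ + 8), le_max_left _ _, by
      have h1 := Nat.le_ceil (8 / ε)
      have h2 : ((⌈8 / ε⌉₊ + 8 : ℕ) : ℝ) ≤ (max (r + 1) (⌈8 / ε⌉₊ + 8) : ℕ) := by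
        exact_mod_cast le_max_right _ _
      push_cast at h2 ⊢
      linarith⟩
  obtain ⟨m, hram⟩ := ramsey_triple t
  set L : ℕ := 4 * 2 ^ (m * m) with hL
  have hL0 : 0 < L := by positivity
  have hL1 : (1 : ℝ) ≤ L := by exact_mod_cast hL0
  set ω : ℝ := ω' / ((2 * m + 2) * (L : ℝ) ^ 2) with hωdef
  have hω : 0 < ω := by positivity
  have hωeq : (2 * m + 2) * ω * (L : ℝ) ^ 2 = ω' := by rw [hωdef]; field_simp
  obtain ⟨κ, hκ, hκ1, ηC, hηC, hseq⟩ := exists_sequence hh hh1 hcrit hω m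
  set η : ℝ := min ηC (min (ω * κ ^ 2 / 2) (κ / L)) with hηdef
  have hη : 0 < η := by positivity
  have hη1 : η ≤ ηC := min_le_left _ _
  have hη2 : η ≤ ω * κ ^ 2 / 2 := (min_le_right _ _).trans (min_le_left _ _)
  have hη3 : η * L ≤ κ := by
    rw [← le_div_iff₀ (by positivity)]
    exact (min_le_right _ _).trans (min_le_right _ _)
  obtain ⟨n, E, A, H⟩ := hex η hη
  obtain ⟨s, hκs, hsA, X, R, hX, hdis, hi, hii⟩ := hseq n E A (H.mono hη1 (by linarith))
  have hηL : η * #A * L ≤ s := by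
    calc η * #A * L = η * L * #A := by ring
      _ ≤ κ * #A := by gcongr
      _ ≤ s := hκs
  have hLs : L ≤ s := by
    have : (L : ℝ) ≤ s := le_trans (by nlinarith [H.big]) hηL
    exact_mod_cast this
  obtain ⟨k, hk, hsk, hks⟩ : ∃ k : ℕ, 0 < k ∧ s ≤ L * k ∧ L * k ≤ 2 * s := by
    refine ⟨s / L + 1, Nat.succ_pos _, ?_, ?_⟩
    · exact (Nat.lt_mul_div_succ s hL0).le
    · have := Nat.mul_div_le s L
      rw [mul_add, mul_one]; omega
  have hk0 : (0 : ℝ) < k := by exact_mod_cast hk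
  have hsk' : (s : ℝ) ≤ L * k := by exact_mod_cast hsk
  have herr : ω * (s : ℝ) ^ 2 ≤ ω' * (k : ℝ) ^ 2 := by
    have h1 : ω * (s : ℝ) ^ 2 ≤ ω * ((L : ℝ) * k) ^ 2 := by gcongr
    have h2 : 0 ≤ (2 * m + 1) * (ω * ((L : ℝ) * k) ^ 2) := by positivity
    rw [← hωeq]
    nlinarith
  have herr' : 2 * m * ω * s ≤ ω' * k := by
    rw [← hωeq]
    calc 2 * m * ω * s ≤ 2 * m * ω * (L * k) := by gcongr
      _ ≤ (2 * m + 2) * ω * ((L : ℝ) ^ 2 * k) := by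
          gcongr
          · linarith
          · nlinarith
      _ = _ := by ring
  have hηs : η * (#A : ℝ) ^ 2 * 2 ≤ ω' * (k : ℝ) ^ 2 := by
    calc η * (#A : ℝ) ^ 2 * 2 ≤ ω * κ ^ 2 / 2 * (#A : ℝ) ^ 2 * 2 := by gcongr
      _ = ω * (κ * #A) ^ 2 := by ring
      _ ≤ ω * (s : ℝ) ^ 2 := by gcongr
      _ ≤ _ := herr
  obtain ⟨Z, hZ⟩ := exists_uniform_subsets
    (fun z A B => (1 / 4 + ε / 2) * (k : ℝ) ^ 2 ≤ ec (fun x y => Adj3 E x z y) A B)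
    (fun i hi => (hX i hi).2) hi hk hω' (by rw [hL] at hks; nlinarith) herr' m le_rfl
  have hZA : ∀ i < m, Z i ⊆ A := fun i hi => (hZ i hi).1.trans (hX i hi).1
  have hZd : ∀ a b, a < b → b < m → Disjoint (Z a) (Z b) := fun a b hab hb =>
    Finset.disjoint_of_subset_left (hZ a (by omega)).1
      (Finset.disjoint_of_subset_right (hZ b hb).1 (hdis a b hab hb))
  have hcod : ∀ z, ∀ a b, a < b → b < m → ∀ X' ⊆ Z a, ∀ Y' ⊆ Z b,
      ec (fun x y => Adj3 E x z y) X' Y' ≤ h * #X' * #Y' + ω' * (k : ℝ) ^ 2 := by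
    intro z a b hab hb X' hX' Y' hY'
    have hXA := hX'.trans (hZA a (by omega))
    have hYA := hY'.trans (hZA b hb)
    have h1 := H.codegree_le hXA hYA (Finset.disjoint_of_subset_left hX'
      (Finset.disjoint_of_subset_right hY' (hZd a b hab hb))) z
    have h2 : η * (#X' * #Y') ≤ η * (#A : ℝ) ^ 2 := by
      rw [sq]
      have := Finset.card_le_card hXA
      have := Finset.card_le_card hYA
      gcongr
    linarith
  obtain ⟨I, hI, hIt, hgood | hbad⟩ := hram (Finset.range m) (by simp)
    (fun a b c => ∀ z ∈ Z c, (1 / 4 + ε / 2) * (k : ℝ) ^ 2 ≤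
      ec (fun x y => Adj3 E x z y) (Z a) (Z b))
  · -- a vertex `z` of the last part has a dense triangle-free link on all pairs of earlier parts
    have hne : I.Nonempty := Finset.card_pos.1 (by omega)
    obtain ⟨c, hcI, hcmax⟩ : ∃ c ∈ I, ∀ a ∈ I, a ≤ c := ⟨I.max' hne, I.max'_mem hne, I.le_max'⟩
    have hcm : c < m := Finset.mem_range.1 (hI hcI)
    have hlt : ∀ a ∈ I.erase c, a < c := fun a ha =>
      lt_of_le_of_ne (hcmax a (Finset.mem_of_mem_erase ha)) (Finset.ne_of_mem_erase ha)
    obtain ⟨I', hI', hI'r⟩ := Finset.exists_subset_card_eq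
      (by rw [Finset.card_erase_of_mem hcI]; omega : r ≤ #(I.erase c))
    have hII : ∀ a ∈ I', a ∈ I := fun a ha => Finset.mem_of_mem_erase (hI' ha)
    have hIc : ∀ a ∈ I', a < c := fun a ha => hlt a (hI' ha)
    obtain ⟨-, hZcard, hdeg, -⟩ := hZ c hcm
    obtain ⟨z, hz⟩ : (Z c).Nonempty := Finset.card_pos.1 (by omega)
    obtain ⟨a, ha, b, hb, hab, hlow⟩ := hsp (Fin n) (fun x y => Adj3 E x z y)
      (fun x y hxy => adj3_swap12.1 (adj3_swap23.1 (adj3_swap12.1 hxy)))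
      (fun x y w h1 h2 h3 => adj3_free H.unif H.free (adj3_swap12.1 h1) (adj3_swap12.1 h2)
        (adj3_swap12.1 h3))
      I' Z (fun a => {x ∈ Z a | R x z}) k h hI'r hk
      (fun i hi => (hZ i ((hIc i hi).trans hcm)).2.1) hh hh1
      (fun i _ => Finset.filter_subset _ _) (fun i hi => hdeg i (hIc i hi) z hz)
      (fun a ha b hb hab X' hX' Y' hY' => by
        have hbm := (hIc b hb).trans hcm
        have ham := (hIc a ha).trans hcm
        have := hii a b c hab hbm (hIc a ha) hcm z ((hZ c hcm).1 hz) X'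
          (hX'.trans ((Finset.filter_subset _ _).trans (hZ a ham).1))
          (fun x hx => (Finset.mem_filter.1 (hX' hx)).2) Y' (hY'.trans (hZ b hbm).1)
        linarith)
      (fun a ha b hb hab X' hX' Y' hY' => hcod z a b hab ((hIc b hb).trans hcm) X' hX' Y' hY')
    exact absurd (hgood a (hII a ha) b (hII b hb) c hcI hab (hIc b hb) z hz) (not_le.2 hlow)
  · -- the union of the parts is too sparse
    have hIm : ∀ i ∈ I, i < m := fun i hi => Finset.mem_range.1 (hI hi)
    have hIk : ∀ i ∈ I, #(Z i) = k := fun i hi => (hZ i (hIm i hi)).2.1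
    have hId : ∀ a ∈ I, ∀ b ∈ I, a ≠ b → Disjoint (Z a) (Z b) := fun a ha b hb hab => by
      rcases lt_or_gt_of_ne hab with h1 | h1
      · exact hZd a b h1 (hIm b hb)
      · exact (hZd b a h1 (hIm a ha)).symm
    have h1 := card_edges_biUnion_le H.unif (θ := 1 / 4 + ε / 2) (by positivity) hIk hId
      fun a ha b hb c hc hab hbc z hz => by
        have := hbad a ha b hb c hc hab hbc
        push Not at this
        obtain ⟨z', hz', hlt⟩ := this
        by_contra hcon
        exact absurd (((hZ c (hIm c hc)).2.2.2 a b hab hbc z hz z' hz').1 (not_le.1 hcon).le)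
          (not_le.2 hlt)
    have hcard : #(I.biUnion Z) = t * k := by
      rw [Finset.card_biUnion hId, Finset.sum_congr rfl hIk, Finset.sum_const, hIt, smul_eq_mul]
    have h2 := H.dens (I.biUnion Z) (Finset.biUnion_subset.2 fun i hi => hZA i (hIm i hi)) (by
      rw [hcard]
      have ht1 : (1 : ℝ) ≤ t := by exact_mod_cast (by omega : 1 ≤ t)
      have h3 : η * #A * L ≤ k * L := by linarith
      have h4 := le_of_mul_le_mul_right h3 (by positivity)
      push_cast
      nlinarith)
    rw [hcard] at h2
    rw [hIt] at h1
    exact sparse_union_false hε hk htε h1 h2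

end ErdosSos

end

/-- A problem of Erdős and Sós on 3-graphs (main theorem):
For every ε > 0 there exist δ > 0 and n₀ such that every 3-uniform hypergraph
on n ≥ n₀ vertices in which every vertex subset `A` with `|A| ≥ δ·n` spans at
least `(1/4 + ε)·C(|A|,3)` edges contains `K₄⁻`, i.e. a set of four vertices
spanning at least three edges. -/
theorem erdos_sos_quarter_linear_density_forces_K4minus :
    ∀ ε : ℝ, 0 < ε →
      ∃ δ : ℝ, 0 < δ ∧ ∃ n₀ : ℕ, ∀ n : ℕ, n₀ ≤ n →
        ∀ E : Finset (Finset (Fin n)),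
          (∀ e ∈ E, e.card = 3) →
          (∀ A : Finset (Fin n), δ * n ≤ (A.card : ℝ) →
            (1 / 4 + ε) * (A.card.choose 3 : ℝ) ≤
              ((E.filter (fun e => e ⊆ A)).card : ℝ)) →
          ∃ s : Finset (Fin n), s.card = 4 ∧
            3 ≤ (E.filter (fun e => e ⊆ s)).card := by
  intro ε hε
  by_contra hcon
  push Not at hcon
  refine ErdosSos.no_hosts hε fun η hη => ?_
  obtain ⟨n, hn, E, hE, hdens, hfree⟩ := hcon η hη ⌈1 / η⌉₊
  refine ⟨n, E, Finset.univ, ?_⟩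
  refine ⟨hE, fun s hs => ?_, ?_, fun A _ hA => ?_, fun X _ B _ _ S _ => ?_⟩
  · have := hfree s hs
    refine not_le.2 (lt_of_eq_of_lt ?_ this)
    congr!
  · rw [Finset.card_univ, Fintype.card_fin]
    have h1 : 1 / η ≤ n := (Nat.le_ceil _).trans (by exact_mod_cast hn)
    rwa [div_le_iff₀' hη] at h1
  · rw [Finset.card_univ, Fintype.card_fin] at hA
    convert hdens A hA
  · rw [one_mul]
    exact ErdosSos.ec_le_mul.trans (le_add_of_nonneg_right (by positivity))
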